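/- Let M ⊆ B(H) and N ⊆ B(K) be von Neumann algebras on Z2-graded Hilbert spaces (H, U) and (K, V) with UMU = M and VNV = N. Then the twisted commutant of the Fermi tensor product satisfies (M ⊗̂ N)^≀ = M^≀ ⊗̂ N^≀, where the grading on H ⊗ K is given by U ⊗ V. -/

import Mathlib

noncomputable section

open scoped InnerProductSpace ComplexOrder

/-- The even part `T₊ = (T + UTU)/2` and odd part `T₋ = (T - UTU)/2` of an operator on a
`ℤ₂`-graded Hilbert space `(H, U)`;  the *twist automorphism* is `η_U(T) = T₊ + i U T₋`. -/
def twist {H : Type*} [NormedAddCommGroup H] [InnerProductSpace ℂ H]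
    (U : H →L[ℂ] H) (T : H →L[ℂ] H) : H →L[ℂ] H :=
  (2⁻¹ : ℂ) • (T + U * T * U) + ((2⁻¹ : ℂ) * Complex.I) • (U * (T - U * T * U))

/-- The *twisted commutant* `M^≀ = η_U(M')` of a set of operators on a `ℤ₂`-graded Hilbert
space `(H, U)` (for `ad U`-invariant `M` this coincides with `η_U(M)'`). -/
def twistedComm {H : Type*} [NormedAddCommGroup H] [InnerProductSpace ℂ H]
    (U : H →L[ℂ] H) (M : Set (H →L[ℂ] H)) : Set (H →L[ℂ] H) :=
  twist U '' Set.centralizer M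

/-- For operators `T ∈ B(H)`, `S ∈ B(K)`, homogeneous with parities `sT`, `sS` relative to the
gradings `U`, `V`, the predicate stating that `P ∈ B(HK)` is the Fermi tensor product operator
`T ⊗̂ S` relative to the realization `tp` of the Hilbert tensor product `H ⊗ K`:
`(T ⊗̂ S)(x ⊗ y) = ε(S, x) (T x ⊗ S y)` with `ε(S, x) = -1` iff both `S` and `x` are odd. -/
def IsFermiTensorOp {H K HK : Type*}
    [NormedAddCommGroup H] [InnerProductSpace ℂ H]
    [NormedAddCommGroup K] [InnerProductSpace ℂ K]
    [NormedAddCommGroup HK] [InnerProductSpace ℂ HK]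
    (U : H →L[ℂ] H) (V : K →L[ℂ] K) (tp : H →ₗ[ℂ] K →ₗ[ℂ] HK)
    (T : H →L[ℂ] H) (S : K →L[ℂ] K) (P : HK →L[ℂ] HK) : Prop :=
  ∃ sT sS : Bool,
    U * T * U = cond sT (-T) T ∧ V * S * V = cond sS (-S) S ∧
    ∀ (x : H) (y : K) (sx : Bool), U x = cond sx (-x) x →
      P (tp x y) = (cond (sS && sx) (-1 : ℂ) 1) • tp (T x) (S y)

/-- The set of Fermi tensor product operators `T ⊗̂ S` with `T ∈ M`, `S ∈ N` homogeneous;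
the Fermi tensor product `M ⊗̂ N` of graded von Neumann algebras is the von Neumann algebra
it generates, i.e. its double commutant. -/
def fermiGen {H K HK : Type*}
    [NormedAddCommGroup H] [InnerProductSpace ℂ H]
    [NormedAddCommGroup K] [InnerProductSpace ℂ K]
    [NormedAddCommGroup HK] [InnerProductSpace ℂ HK]
    (U : H →L[ℂ] H) (V : K →L[ℂ] K) (tp : H →ₗ[ℂ] K →ₗ[ℂ] HK)
    (M : Set (H →L[ℂ] H)) (N : Set (K →L[ℂ] K)) : Set (HK →L[ℂ] HK) :=
  {P : HK →L[ℂ] HK | ∃ T ∈ M, ∃ S ∈ N, IsFermiTensorOp U V tp T S P}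

/-!
Let `A` and `B` be commuting involutions. The Klein twist `κ_{A,B} X = X₊ + X₋ B`, with `X₊`, `X₋`
the even and odd parts of `X` for `ad A`, is an involutive linear map; for an `ad A`- and
`ad B`-stable set `C` it satisfies `(κ_{A,B} C)' = κ_{B,A} C'`, and it is multiplicative in each of
`A` and `B`. With `A = U ⊗ 1` and `B = 1 ⊗ V`, the Fermi tensor product `T ⊗̂ S` is
`κ_{B,A} (T ⊗ S)`, while `κ_{U,U}`, `κ_{V,V}` and `κ_{AB,AB}` compute the twisted commutants on
`H`, `K` and `H ⊗ K`. Since `κ_{AB,AB} κ_{A,B} = κ_{B,A} κ_{A,A} κ_{B,B}`, the twisted theorem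
reduces to Tomita's commutation theorem `(M ⊗ N)' = (M' ⊗ N')''`.

The proof of the latter is the real-subspace argument of Rieffel and van Daele. One has to show that
`⟪X Y ω, ω⟫ = ⟪Y X ω, ω⟫` for self-adjoint `X ∈ (M ⊗ N)'`, any `Y ∈ (M' ⊗ N')'` and
`ω = ω₁ ⊗ ω₂`. Compressed to the cyclic subspaces of `M` at `ω₁` and `N` at `ω₂`, the vector `X ω`
is a limit of real combinations of vectors `b ω₁ ⊗ d ω₂` with `b ∈ M'` and `d ∈ N'` self-adjoint:
a vector `z` in the tensor product of the cyclic subspaces that is real orthogonal to all of these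
and symplectically orthogonal to the vectors `a ω₁ ⊗ c ω₂` with `a ∈ M`, `c ∈ N` self-adjoint is
sent to `-z` by `R ⊗ R'`, where `R = 1 - (P + Q)` is built from the real projections `P` and `Q`
onto the closure `𝒦` of `{a ω₁}` and onto `i𝒦`, and similarly `R'` with `{c ω₂}` and `𝒦'`. As `R`
and `R'` are self-adjoint contractions, `z` is fixed by `R² ⊗ 1` and `1 ⊗ R'²`, so it is a
combination of fixed vectors of `R ⊗ 1` and of `1 ⊗ R'`; a fixed vector of `R` is orthogonal to `𝒦`,
so `z` is orthogonal to `𝒦 ⊗ 𝒦'` and vanishes.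
-/

section KleinTwist

open Set

variable {𝕜 R : Type*} [Field 𝕜] [Ring R] [Algebra 𝕜 R] {A B C D : R} {S : Set R}

theorem mapsTo_conj_centralizer (hA : A * A = 1) (hS : MapsTo (A * · * A) S S) :
    MapsTo (A * · * A) S.centralizer S.centralizer := by
  intro Y hY X hX
  have hXY : A * X * A * Y = Y * (A * X * A) := hY _ (hS hX)
  calc X * (A * Y * A) = (A * A) * X * (A * Y * A) := by rw [hA, one_mul]
    _ = A * (A * X * A * Y) * A := by noncomm_ring
    _ = A * Y * A * X * (A * A) := by rw [hXY]; noncomm_ring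
    _ = A * Y * A * X := by rw [hA, mul_one]

variable (𝕜) in
/-- The even part `½ (X + A X A)` of `X` for the grading implemented by an involution `A`. -/
def evenPart (A : R) : R →ₗ[𝕜] R :=
  (2⁻¹ : 𝕜) • (LinearMap.id + LinearMap.mulLeftRight 𝕜 (A, A))

variable (𝕜) in
/-- The odd part `½ (X - A X A)` of `X` for the grading implemented by an involution `A`. -/
def oddPart (A : R) : R →ₗ[𝕜] R :=
  (2⁻¹ : 𝕜) • (LinearMap.id - LinearMap.mulLeftRight 𝕜 (A, A))

theorem evenPart_apply (A X : R) : evenPart 𝕜 A X = (2⁻¹ : 𝕜) • (X + A * X * A) := by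
  simp [evenPart]

theorem oddPart_apply (A X : R) : oddPart 𝕜 A X = (2⁻¹ : 𝕜) • (X - A * X * A) := by
  simp [oddPart]

theorem evenPart_mem {p : Submodule 𝕜 R} (hp : MapsTo (A * · * A) p p) {X : R} (hX : X ∈ p) :
    evenPart 𝕜 A X ∈ p := by
  rw [evenPart_apply]
  exact p.smul_mem _ (p.add_mem hX (hp hX))

theorem oddPart_mem {p : Submodule 𝕜 R} (hp : MapsTo (A * · * A) p p) {X : R} (hX : X ∈ p) :
    oddPart 𝕜 A X ∈ p := by
  rw [oddPart_apply]
  exact p.smul_mem _ (p.sub_mem hX (hp hX))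

theorem mul_evenPart (hA : A * A = 1) (X : R) : A * evenPart 𝕜 A X = evenPart 𝕜 A X * A := by
  simp only [evenPart_apply, mul_smul_comm, smul_mul_assoc, mul_add, add_mul, ← mul_assoc, hA,
    one_mul]
  rw [mul_assoc _ A A, hA, mul_one, add_comm]

theorem mul_oddPart (hA : A * A = 1) (X : R) : A * oddPart 𝕜 A X = -(oddPart 𝕜 A X * A) := by
  simp only [oddPart_apply, mul_smul_comm, smul_mul_assoc, mul_sub, sub_mul, ← mul_assoc, hA,
    one_mul]
  rw [mul_assoc _ A A, hA, mul_one, ← smul_neg, neg_sub]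

theorem conj_evenPart (hA : A * A = 1) (X : R) : A * evenPart 𝕜 A X * A = evenPart 𝕜 A X := by
  rw [mul_evenPart hA, mul_assoc, hA, mul_one]

theorem conj_oddPart (hA : A * A = 1) (X : R) : A * oddPart 𝕜 A X * A = -oddPart 𝕜 A X := by
  rw [mul_oddPart hA, neg_mul, mul_assoc, hA, mul_one]

variable (𝕜) in
/-- The Klein twist `X ↦ X₊ + X₋ B`, with `X₊`, `X₋` the even and odd parts of `X` for the grading
implemented by `A`. For a tensor product it converts `T ⊗ S` into the Fermi tensor product: with
`A = 1 ⊗ V` and `B = U ⊗ 1`, an odd `S` gives `T U ⊗ S`. -/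
def kleinTwist (A B : R) : R →ₗ[𝕜] R :=
  evenPart 𝕜 A + LinearMap.mulRight 𝕜 B ∘ₗ oddPart 𝕜 A

theorem kleinTwist_apply (A B X : R) :
    kleinTwist 𝕜 A B X = evenPart 𝕜 A X + oddPart 𝕜 A X * B := by
  simp [kleinTwist]

theorem kleinTwist_mul_of_commute {Y : R} (hYA : Commute Y A) (hYB : Commute Y B) (X : R) :
    kleinTwist 𝕜 A B (X * Y) = kleinTwist 𝕜 A B X * Y := by
  simp only [kleinTwist_apply, evenPart_apply, oddPart_apply, add_mul, sub_mul, smul_mul_assoc,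
    mul_assoc, hYA.eq, hYB.eq]

theorem mul_kleinTwist_of_commute {Y : R} (hYA : Commute Y A) (X : R) :
    kleinTwist 𝕜 A B (Y * X) = Y * kleinTwist 𝕜 A B X := by
  simp only [kleinTwist_apply, evenPart_apply, oddPart_apply, mul_add, mul_sub, sub_mul,
    smul_mul_assoc, mul_smul_comm, mul_assoc, hYA.left_comm]

theorem kleinTwist_comm (hAC : Commute A C) (hAD : Commute A D) (hBC : Commute B C)
    (hBD : Commute B D) (X : R) :
    kleinTwist 𝕜 A B (kleinTwist 𝕜 C D X) = kleinTwist 𝕜 C D (kleinTwist 𝕜 A B X) := by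
  simp only [kleinTwist_apply, evenPart_apply, oddPart_apply, mul_add, mul_sub, add_mul, sub_mul,
    smul_add, smul_sub, mul_smul_comm, smul_mul_assoc, mul_assoc, hAC.eq, hAD.eq, hBC.eq, hBD.eq,
    hAC.left_comm, hAD.left_comm]
  module

theorem mapsTo_conj_image_kleinTwist (hAD : Commute A D) (hBD : Commute B D)
    (hS : MapsTo (D * · * D) S S) :
    MapsTo (D * · * D) (kleinTwist 𝕜 A B '' S) (kleinTwist 𝕜 A B '' S) := by
  rintro _ ⟨X, hX, rfl⟩
  refine ⟨D * X * D, hS hX, ?_⟩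
  rw [kleinTwist_mul_of_commute hAD.symm hBD.symm, mul_kleinTwist_of_commute hAD.symm]

theorem commute_add_mul_of_even_odd {X₀ X₁ Y₀ Y₁ : R} (hAB : Commute A B)
    (hX₀ : A * X₀ = X₀ * A) (hX₁ : A * X₁ = -(X₁ * A)) (hY₀ : B * Y₀ = Y₀ * B)
    (hY₁ : B * Y₁ = -(Y₁ * B)) (h₀₀ : Commute X₀ Y₀) (h₀₁ : Commute X₀ Y₁) (h₁₀ : Commute X₁ Y₀)
    (h₁₁ : Commute X₁ Y₁) :
    Commute (X₀ + X₁ * B) (Y₀ + Y₁ * A) := by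
  have hX₀A : Commute X₀ A := hX₀.symm
  have hBY₀ : Commute B Y₀ := hY₀
  have hodd : Commute (X₁ * B) (Y₁ * A) :=
    calc X₁ * B * (Y₁ * A) = X₁ * (B * Y₁) * A := by simp only [mul_assoc]
      _ = -(X₁ * Y₁ * (B * A)) := by rw [hY₁]; noncomm_ring
      _ = -(Y₁ * X₁ * (A * B)) := by rw [h₁₁.eq, hAB.eq]
      _ = Y₁ * (A * X₁) * B := by rw [hX₁]; noncomm_ring
      _ = Y₁ * A * (X₁ * B) := by simp only [mul_assoc]
  exact (h₀₀.add_right (h₀₁.mul_right hX₀A)).add_left ((h₁₀.mul_left hBY₀).add_right hodd)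

theorem image_kleinTwist_centralizer_subset (hA : A * A = 1) (hB : B * B = 1) (hAB : Commute A B)
    (hSA : MapsTo (A * · * A) S S) (hSB : MapsTo (B * · * B) S S) :
    kleinTwist 𝕜 B A '' S.centralizer ⊆ (kleinTwist 𝕜 A B '' S).centralizer := by
  rintro _ ⟨Y, hY, rfl⟩ _ ⟨X, hX, rfl⟩
  have hX : X ∈ S.centralizer.centralizer := S.subset_centralizer_centralizer hX
  have hS'B := mapsTo_conj_centralizer hB hSB
  have hS''A := mapsTo_conj_centralizer hA (mapsTo_conj_centralizer hA hSA)
  have comm {P Q : R} (hP : P ∈ Subalgebra.centralizer 𝕜 S.centralizer)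
      (hQ : Q ∈ Subalgebra.centralizer 𝕜 S) : Commute P Q := (hP Q hQ).symm
  have hX₀ : evenPart 𝕜 A X ∈ Subalgebra.centralizer 𝕜 S.centralizer :=
    evenPart_mem (p := (Subalgebra.centralizer 𝕜 S.centralizer).toSubmodule) hS''A hX
  have hX₁ : oddPart 𝕜 A X ∈ Subalgebra.centralizer 𝕜 S.centralizer :=
    oddPart_mem (p := (Subalgebra.centralizer 𝕜 S.centralizer).toSubmodule) hS''A hX
  have hY₀ : evenPart 𝕜 B Y ∈ Subalgebra.centralizer 𝕜 S :=
    evenPart_mem (p := (Subalgebra.centralizer 𝕜 S).toSubmodule) hS'B hY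
  have hY₁ : oddPart 𝕜 B Y ∈ Subalgebra.centralizer 𝕜 S :=
    oddPart_mem (p := (Subalgebra.centralizer 𝕜 S).toSubmodule) hS'B hY
  rw [kleinTwist_apply, kleinTwist_apply]
  exact commute_add_mul_of_even_odd hAB (mul_evenPart hA X) (mul_oddPart hA X) (mul_evenPart hB Y)
    (mul_oddPart hB Y) (comm hX₀ hY₀) (comm hX₀ hY₁) (comm hX₁ hY₀) (comm hX₁ hY₁)

variable [NeZero (2 : 𝕜)]

theorem evenPart_add_oddPart (A X : R) : evenPart 𝕜 A X + oddPart 𝕜 A X = X := by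
  have h2 : (2 : 𝕜) ≠ 0 := two_ne_zero
  simp only [evenPart_apply, oddPart_apply]
  match_scalars <;> field_simp <;> ring

theorem kleinTwist_mul_left (hC : C * C = 1) (hAB : Commute A B) (hAC : Commute A C) (X : R) :
    kleinTwist 𝕜 (A * B) C X = kleinTwist 𝕜 A C (kleinTwist 𝕜 B C X) := by
  have h2 : (2 : 𝕜) ≠ 0 := two_ne_zero
  simp only [kleinTwist_apply, evenPart_apply, oddPart_apply, mul_add, mul_sub, add_mul, sub_mul,
    smul_add, smul_sub, mul_smul_comm, smul_mul_assoc, mul_assoc, hC, mul_one, hAB.symm.eq,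
    hAC.symm.eq, hAB.symm.left_comm]
  match_scalars <;> field_simp <;> ring

theorem kleinTwist_mul_right (hA : A * A = 1) (hAC : Commute A C) (hBC : Commute B C) (X : R) :
    kleinTwist 𝕜 A (B * C) X = kleinTwist 𝕜 A B (kleinTwist 𝕜 A C X) := by
  have h2 : (2 : 𝕜) ≠ 0 := two_ne_zero
  have hAA (Y : R) : A * (A * Y) = Y := by rw [← mul_assoc, hA, one_mul]
  simp only [kleinTwist_apply, evenPart_apply, oddPart_apply, mul_add, mul_sub, add_mul, sub_mul,
    smul_add, smul_sub, mul_smul_comm, smul_mul_assoc, mul_assoc, hA, hAA, mul_one, hAC.symm.eq,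
    hBC.symm.eq]
  match_scalars <;> field_simp <;> ring

theorem kleinTwist_involutive (hA : A * A = 1) (hB : B * B = 1) (hAB : Commute A B) :
    Function.Involutive (kleinTwist 𝕜 A B) := by
  intro X
  rw [← kleinTwist_mul_right hA hAB (Commute.refl B), hB, kleinTwist_apply, mul_one,
    evenPart_add_oddPart]

theorem centralizer_image_kleinTwist (hA : A * A = 1) (hB : B * B = 1) (hAB : Commute A B)
    (hSA : MapsTo (A * · * A) S S) (hSB : MapsTo (B * · * B) S S) :
    (kleinTwist 𝕜 A B '' S).centralizer = kleinTwist 𝕜 B A '' S.centralizer := by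
  refine Subset.antisymm (fun Z hZ ↦ ?_) (image_kleinTwist_centralizer_subset hA hB hAB hSA hSB)
  have hBA := kleinTwist_involutive (𝕜 := 𝕜) hB hA hAB.symm
  have hκ : kleinTwist 𝕜 A B '' (kleinTwist 𝕜 A B '' S) = S := by
    simp only [image_image, kleinTwist_involutive hA hB hAB _, image_id']
  have hZS := image_kleinTwist_centralizer_subset (𝕜 := 𝕜) hA hB hAB
    (mapsTo_conj_image_kleinTwist (Commute.refl A) hAB.symm hSA)
    (mapsTo_conj_image_kleinTwist hAB (Commute.refl B) hSB) (mem_image_of_mem _ hZ)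
  rw [hκ] at hZS
  exact ⟨_, hZS, hBA Z⟩

theorem kleinTwist_of_conj_eq {X : R} (hX : A * X * A = X) : kleinTwist 𝕜 A B X = X := by
  have h2 : (2 : 𝕜) ≠ 0 := two_ne_zero
  rw [kleinTwist_apply, evenPart_apply, oddPart_apply, hX, sub_self, smul_zero, zero_mul, add_zero,
    ← two_smul 𝕜, inv_smul_smul₀ h2]

theorem kleinTwist_of_conj_eq_neg {X : R} (hX : A * X * A = -X) :
    kleinTwist 𝕜 A B X = X * B := by
  have h2 : (2 : 𝕜) ≠ 0 := two_ne_zero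
  rw [kleinTwist_apply, evenPart_apply, oddPart_apply, hX, sub_neg_eq_add, add_neg_cancel,
    smul_zero, zero_add, ← two_smul 𝕜, inv_smul_smul₀ h2]

theorem kleinTwist_evenPart_add_smul_oddPart (hA : A * A = 1) (c : 𝕜) (X : R) :
    kleinTwist 𝕜 A B (evenPart 𝕜 A X + c • oddPart 𝕜 A X) =
      evenPart 𝕜 A X + c • (oddPart 𝕜 A X * B) := by
  rw [map_add, map_smul, kleinTwist_of_conj_eq (conj_evenPart hA X),
    kleinTwist_of_conj_eq_neg (conj_oddPart hA X)]

theorem evenPart_evenPart_add_smul_oddPart (hA : A * A = 1) (c : 𝕜) (X : R) :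
    evenPart 𝕜 A (evenPart 𝕜 A X + c • oddPart 𝕜 A X) = evenPart 𝕜 A X := by
  have h2 : (2 : 𝕜) ≠ 0 := two_ne_zero
  rw [evenPart_apply (𝕜 := 𝕜) A (_ + _), mul_add, add_mul, mul_smul_comm, smul_mul_assoc,
    conj_evenPart hA, conj_oddPart hA]
  match_scalars <;> field_simp <;> ring

theorem oddPart_evenPart_add_smul_oddPart (hA : A * A = 1) (c : 𝕜) (X : R) :
    oddPart 𝕜 A (evenPart 𝕜 A X + c • oddPart 𝕜 A X) = c • oddPart 𝕜 A X := by
  have h2 : (2 : 𝕜) ≠ 0 := two_ne_zero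
  rw [oddPart_apply (𝕜 := 𝕜) A (_ + _), mul_add, add_mul, mul_smul_comm, smul_mul_assoc,
    conj_evenPart hA, conj_oddPart hA]
  match_scalars <;> field_simp <;> ring

theorem centralizer_centralizer_image_kleinTwist (hA : A * A = 1) (hB : B * B = 1)
    (hAB : Commute A B) (hSA : MapsTo (A * · * A) S S) (hSB : MapsTo (B * · * B) S S) :
    (kleinTwist 𝕜 A B '' S).centralizer.centralizer =
      kleinTwist 𝕜 A B '' S.centralizer.centralizer := by
  rw [centralizer_image_kleinTwist hA hB hAB hSA hSB,
    centralizer_image_kleinTwist hB hA hAB.symm (mapsTo_conj_centralizer hB hSB)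
      (mapsTo_conj_centralizer hA hSA)]

theorem kleinTwist_mul_mul_kleinTwist (hA : A * A = 1) (hB : B * B = 1) (hAB : Commute A B)
    (X : R) :
    kleinTwist 𝕜 (A * B) (A * B) (kleinTwist 𝕜 A B X) =
      kleinTwist 𝕜 B A (kleinTwist 𝕜 A A (kleinTwist 𝕜 B B X)) := by
  have hAA := Commute.refl A
  have hBB := Commute.refl B
  have hABAB : A * B * (A * B) = 1 := by rw [hAB.symm.mul_mul_mul_comm, hA, hB, one_mul]
  calc kleinTwist 𝕜 (A * B) (A * B) (kleinTwist 𝕜 A B X)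
    _ = kleinTwist 𝕜 A A (kleinTwist 𝕜 A B
          (kleinTwist 𝕜 B A (kleinTwist 𝕜 B B (kleinTwist 𝕜 A B X)))) := by
      rw [kleinTwist_mul_left hABAB hAB (hAA.mul_right hAB), kleinTwist_mul_right hA hAB hAB,
        kleinTwist_mul_right hB hBB hAB]
    _ = kleinTwist 𝕜 A A (kleinTwist 𝕜 A B
          (kleinTwist 𝕜 A B (kleinTwist 𝕜 B A (kleinTwist 𝕜 B B X)))) := by
      rw [kleinTwist_comm hAB.symm hBB hAB.symm hBB, kleinTwist_comm hAB.symm hBB hAA hAB]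
    _ = kleinTwist 𝕜 B A (kleinTwist 𝕜 A A (kleinTwist 𝕜 B B X)) := by
      rw [kleinTwist_involutive hA hB hAB, kleinTwist_comm hAB hAA hAB hAA]

end KleinTwist

section BoundedOperator

open ContinuousLinearMap (adjoint)

variable {H : Type*} [NormedAddCommGroup H] [InnerProductSpace ℂ H] [CompleteSpace H]

theorem inner_apply_left_of_isSelfAdjoint {𝕜 E : Type*} [RCLike 𝕜] [NormedAddCommGroup E]
    [InnerProductSpace 𝕜 E] [CompleteSpace E] {T : E →L[𝕜] E} (hT : IsSelfAdjoint T) (x y : E) :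
    ⟪T x, y⟫_𝕜 = ⟪x, T y⟫_𝕜 :=
  hT.isSymmetric x y

theorem im_inner_apply_apply_of_commute {S T : H →L[ℂ] H} (hS : IsSelfAdjoint S)
    (hT : IsSelfAdjoint T) (hST : Commute S T) (x : H) : (⟪S x, T x⟫_ℂ).im = 0 := by
  have hcomm : S (T x) = T (S x) := congr($hST.eq x)
  refine Complex.conj_eq_iff_im.1 ?_
  rw [inner_conj_symm, inner_apply_left_of_isSelfAdjoint hT, ← hcomm,
    inner_apply_left_of_isSelfAdjoint hS]

theorem apply_eq_zero_of_inner_apply_self_eq_zero {T : H →L[ℂ] H} (hT : 0 ≤ T) {x : H}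
    (hx : ⟪T x, x⟫_ℂ = 0) : T x = 0 := by
  obtain ⟨R, rfl⟩ := CStarAlgebra.nonneg_iff_eq_star_mul_self.1 hT
  have hRx : R x = 0 := by
    rwa [mul_apply_eq_comp, ContinuousLinearMap.star_eq_adjoint,
      ContinuousLinearMap.adjoint_inner_left, inner_self_eq_zero] at hx
  rw [mul_apply_eq_comp, hRx, map_zero]

theorem inner_apply_apply_eq_zero {G : Type*} [NormedAddCommGroup G] [InnerProductSpace ℂ G]
    [CompleteSpace G] (a b : H →L[ℂ] G) (hab : ∀ x, ⟪a x, b x⟫_ℂ = 0) (x x' : H) :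
    ⟪a x, b x'⟫_ℂ = 0 := by
  have h0 : (adjoint b ∘L a).toLinearMap = 0 :=
    (inner_map_self_eq_zero _).1 fun x ↦ by simp [ContinuousLinearMap.adjoint_inner_left, hab]
  simpa [ContinuousLinearMap.adjoint_inner_left] using
    congrArg (⟪·, x'⟫_ℂ) (LinearMap.congr_fun h0 x)

end BoundedOperator

section HilbertTensorProduct

open scoped TensorProduct

/-- The bilinear map `tp` exhibits `HK` as the Hilbert tensor product of `H` and `K`. -/
structure IsHilbertTensorProduct {𝕜 H K HK : Type*} [RCLike 𝕜]
    [NormedAddCommGroup H] [InnerProductSpace 𝕜 H]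
    [NormedAddCommGroup K] [InnerProductSpace 𝕜 K]
    [NormedAddCommGroup HK] [InnerProductSpace 𝕜 HK]
    (tp : H →ₗ[𝕜] K →ₗ[𝕜] HK) : Prop where
  inner_apply_apply (x x' : H) (y y' : K) : ⟪tp x y, tp x' y'⟫_𝕜 = ⟪x, x'⟫_𝕜 * ⟪y, y'⟫_𝕜
  dense_span : Dense (Submodule.span 𝕜 {z : HK | ∃ x y, z = tp x y} : Set HK)

namespace IsHilbertTensorProduct

section RCLike

variable {𝕜 H K HK : Type*} [RCLike 𝕜]
  [NormedAddCommGroup H] [InnerProductSpace 𝕜 H]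
  [NormedAddCommGroup K] [InnerProductSpace 𝕜 K]
  [NormedAddCommGroup HK] [InnerProductSpace 𝕜 HK]
  {tp : H →ₗ[𝕜] K →ₗ[𝕜] HK}

theorem inner_lift_lift (h : IsHilbertTensorProduct tp) (a b : H ⊗[𝕜] K) :
    ⟪TensorProduct.lift tp a, TensorProduct.lift tp b⟫_𝕜 = ⟪a, b⟫_𝕜 := by
  induction a using TensorProduct.induction_on with
  | zero => simp
  | add a a' ha ha' => simp only [map_add, inner_add_left, ha, ha']
  | tmul x y =>
    induction b using TensorProduct.induction_on with
    | zero => simp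
    | add b b' hb hb' => simp only [map_add, inner_add_right, hb, hb']
    | tmul x' y' => simp [h.inner_apply_apply]

theorem norm_lift (h : IsHilbertTensorProduct tp) (a : H ⊗[𝕜] K) :
    ‖TensorProduct.lift tp a‖ = ‖a‖ :=
  ((TensorProduct.lift tp).isometryOfInner h.inner_lift_lift).norm_map a

theorem norm_apply (h : IsHilbertTensorProduct tp) (x : H) (y : K) : ‖tp x y‖ = ‖x‖ * ‖y‖ := by
  simpa using h.norm_lift (x ⊗ₜ y)

theorem denseRange_lift (h : IsHilbertTensorProduct tp) :
    DenseRange (TensorProduct.lift tp) := by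
  refine h.dense_span.mono ?_
  rw [← LinearMap.coe_range, SetLike.coe_subset_coe, Submodule.span_le]
  rintro _ ⟨x, y, rfl⟩
  exact ⟨x ⊗ₜ y, by simp⟩

theorem ext {E : Type*} [NormedAddCommGroup E] [NormedSpace 𝕜 E] (h : IsHilbertTensorProduct tp)
    {P Q : HK →L[𝕜] E} (hPQ : ∀ x y, P (tp x y) = Q (tp x y)) : P = Q := by
  refine ContinuousLinearMap.ext_on h.dense_span ?_
  rintro _ ⟨x, y, rfl⟩
  exact hPQ x y

theorem eq_of_inner_left (h : IsHilbertTensorProduct tp) {z z' : HK}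
    (hz : ∀ x y, ⟪z, tp x y⟫_𝕜 = ⟪z', tp x y⟫_𝕜) : z = z' :=
  (innerSL_inj (𝕜 := 𝕜)).1 (h.ext (P := innerSL 𝕜 z) (Q := innerSL 𝕜 z') hz)

/-- The bounded bilinear version of the universal map of a Hilbert tensor product. -/
def mkL (h : IsHilbertTensorProduct tp) : H →L[𝕜] K →L[𝕜] HK :=
  tp.mkContinuous₂ 1 fun x y ↦ by rw [h.norm_apply, one_mul]

@[simp]
theorem mkL_apply (h : IsHilbertTensorProduct tp) (x : H) (y : K) : h.mkL x y = tp x y := rfl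

theorem inner_apply_mem_of_mem_closure (h : IsHilbertTensorProduct tp) {z : HK} {C : Set 𝕜}
    (hC : IsClosed C) {s : Set H} {t : Set K} (hst : ∀ x ∈ s, ∀ y ∈ t, ⟪z, tp x y⟫_𝕜 ∈ C)
    {x : H} (hx : x ∈ closure s) {y : K} (hy : y ∈ closure t) : ⟪z, tp x y⟫_𝕜 ∈ C := by
  rw [← hC.closure_eq]
  have hcont : Continuous (Function.uncurry fun x y ↦ ⟪z, h.mkL x y⟫_𝕜) := by
    unfold Function.uncurry
    fun_prop
  exact map_mem_closure₂ (f := fun x y ↦ ⟪z, h.mkL x y⟫_𝕜) hcont hx hy hst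

theorem norm_lift_map_le (h : IsHilbertTensorProduct tp) (T : H →L[𝕜] H) (S : K →L[𝕜] K)
    (a : H ⊗[𝕜] K) :
    ‖(TensorProduct.lift tp ∘ₗ (TensorProduct.mapL T S).toLinearMap) a‖ ≤
      ‖T‖ * ‖S‖ * ‖TensorProduct.lift tp a‖ := by
  rw [LinearMap.comp_apply, h.norm_lift, h.norm_lift]
  exact (TensorProduct.mapL T S).le_of_opNorm_le (TensorProduct.norm_mapL_le T S) a

variable [CompleteSpace HK]

/-- The bounded operator `T ⊗ S` on a Hilbert tensor product, extended from the algebraic tensor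
product by density. -/
def tensorOperator (tp : H →ₗ[𝕜] K →ₗ[𝕜] HK) (T : H →L[𝕜] H) (S : K →L[𝕜] K) : HK →L[𝕜] HK :=
  LinearMap.extendOfNorm (TensorProduct.lift tp ∘ₗ (TensorProduct.mapL T S).toLinearMap)
    (TensorProduct.lift tp)

theorem tensorOperator_apply (h : IsHilbertTensorProduct tp) (T : H →L[𝕜] H) (S : K →L[𝕜] K)
    (x : H) (y : K) : tensorOperator tp T S (tp x y) = tp (T x) (S y) := by
  simpa [tensorOperator] using
    LinearMap.extendOfNorm_eq h.denseRange_lift ⟨_, h.norm_lift_map_le T S⟩ (x ⊗ₜ y)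

/-- The operator `T ⊗ S` on a Hilbert tensor product as a bilinear function of `T` and `S`. -/
def map (h : IsHilbertTensorProduct tp) :
    (H →L[𝕜] H) →ₗ[𝕜] (K →L[𝕜] K) →ₗ[𝕜] (HK →L[𝕜] HK) :=
  LinearMap.mk₂ 𝕜 (tensorOperator tp)
    (fun T T' S ↦ h.ext fun x y ↦ by simp [h.tensorOperator_apply])
    (fun c T S ↦ h.ext fun x y ↦ by simp [h.tensorOperator_apply])
    (fun T S S' ↦ h.ext fun x y ↦ by simp [h.tensorOperator_apply])
    (fun c T S ↦ h.ext fun x y ↦ by simp [h.tensorOperator_apply])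

@[simp]
theorem map_apply (h : IsHilbertTensorProduct tp) (T : H →L[𝕜] H) (S : K →L[𝕜] K) (x : H) (y : K) :
    h.map T S (tp x y) = tp (T x) (S y) :=
  h.tensorOperator_apply T S x y

theorem norm_map_le (h : IsHilbertTensorProduct tp) (T : H →L[𝕜] H) (S : K →L[𝕜] K) :
    ‖h.map T S‖ ≤ ‖T‖ * ‖S‖ :=
  LinearMap.opNorm_extendOfNorm_le h.denseRange_lift (by positivity) (h.norm_lift_map_le T S)

@[simp]
theorem map_one_one (h : IsHilbertTensorProduct tp) : h.map 1 1 = 1 :=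
  h.ext fun x y ↦ by simp

theorem map_mul_map (h : IsHilbertTensorProduct tp) (T T' : H →L[𝕜] H) (S S' : K →L[𝕜] K) :
    h.map T S * h.map T' S' = h.map (T * T') (S * S') :=
  h.ext fun x y ↦ by simp

theorem star_map [CompleteSpace H] [CompleteSpace K] (h : IsHilbertTensorProduct tp)
    (T : H →L[𝕜] H) (S : K →L[𝕜] K) : star (h.map T S) = h.map (star T) (star S) := by
  refine h.ext fun x y ↦ h.eq_of_inner_left fun x' y' ↦ ?_
  simp only [ContinuousLinearMap.star_eq_adjoint, ContinuousLinearMap.adjoint_inner_left,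
    map_apply, h.inner_apply_apply]

theorem isSelfAdjoint_map [CompleteSpace H] [CompleteSpace K] (h : IsHilbertTensorProduct tp)
    {T : H →L[𝕜] H} {S : K →L[𝕜] K} (hT : IsSelfAdjoint T) (hS : IsSelfAdjoint S) :
    IsSelfAdjoint (h.map T S) := by
  rw [IsSelfAdjoint, h.star_map, hT.star_eq, hS.star_eq]

end RCLike

theorem eq_zero_of_inner_apply_self {H K HK : Type*}
    [NormedAddCommGroup H] [InnerProductSpace ℂ H] [CompleteSpace H]
    [NormedAddCommGroup K] [InnerProductSpace ℂ K] [CompleteSpace K]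
    [NormedAddCommGroup HK] [InnerProductSpace ℂ HK] [CompleteSpace HK]
    {tp : H →ₗ[ℂ] K →ₗ[ℂ] HK} (h : IsHilbertTensorProduct tp) {Z : HK →L[ℂ] HK}
    (hZ : ∀ x y, ⟪Z (tp x y), tp x y⟫_ℂ = 0) : Z = 0 := by
  have hleft (x x' : H) (y : K) : ⟪Z (tp x y), tp x' y⟫_ℂ = 0 :=
    inner_apply_apply_eq_zero (Z ∘L h.mkL.flip y) (h.mkL.flip y) (fun x ↦ hZ x y) x x'
  refine h.ext fun x y ↦ h.eq_of_inner_left fun x' y' ↦ ?_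
  simpa using inner_apply_apply_eq_zero (Z ∘L h.mkL x) (h.mkL x') (fun y ↦ hleft x x' y) y y'

end IsHilbertTensorProduct

end HilbertTensorProduct

section RealSubspace

open Complex (I)
open ContinuousLinearMap (adjoint)

attribute [local instance] InnerProductSpace.complexToReal

variable {H : Type*} [NormedAddCommGroup H] [InnerProductSpace ℂ H]

theorem re_inner_I_smul_left (x y : H) : (⟪I • x, y⟫_ℂ).re = (⟪x, y⟫_ℂ).im := by
  simp

theorem re_inner_I_smul_right (x y : H) : (⟪x, I • y⟫_ℂ).re = -(⟪x, y⟫_ℂ).im := by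
  simp

theorem im_inner_I_smul_right (x y : H) : (⟪x, I • y⟫_ℂ).im = (⟪x, y⟫_ℂ).re := by
  simp

theorem I_smul_I_smul (x : H) : I • I • x = -x := by
  rw [← mul_smul, Complex.I_mul_I, neg_one_smul]

/-- The complement of a real subspace of a complex Hilbert space for the symplectic form
`Im ⟪·, ·⟫`. -/
def symplecticComplement (𝒦 : Submodule ℝ H) : Submodule ℝ H where
  carrier := {b | ∀ a ∈ 𝒦, (⟪a, b⟫_ℂ).im = 0}
  add_mem' hb hb' a ha := by simp [hb a ha, hb' a ha]
  zero_mem' a _ := by simp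
  smul_mem' r b hb a ha := by simp [inner_smul_right_eq_smul, hb a ha]

theorem I_smul_mem_symplecticComplement {𝒦 : Submodule ℝ H} {x : H} (hx : x ∈ 𝒦ᗮ) :
    I • x ∈ symplecticComplement 𝒦 := fun a ha ↦ by
  rw [im_inner_I_smul_right]
  exact hx a ha

theorem isClosed_symplecticComplement {𝒦 : Submodule ℝ H} :
    IsClosed (symplecticComplement 𝒦 : Set H) := by
  have hset : (symplecticComplement 𝒦 : Set H) = ⋂ a ∈ 𝒦, {b | (⟪a, b⟫_ℂ).im = 0} := by
    ext b
    simp [symplecticComplement]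
  rw [hset]
  exact isClosed_biInter fun a _ ↦ isClosed_eq (by fun_prop) continuous_const

variable (𝒦 : Submodule ℝ H) [𝒦.HasOrthogonalProjection]

/-- The operator `1 - (P + Q)`, where `P` and `Q` are the real orthogonal projections onto a real
subspace `𝒦` and onto `i𝒦`. It is complex linear although `P` and `Q` are not. -/
def modularContraction : H →L[ℂ] H where
  toFun x := x - 𝒦.starProjection x + I • 𝒦.starProjection (I • x)
  map_add' x y := by simp only [smul_add, map_add]; abel
  map_smul' c x := by
    have hc (y : H) : c • y = c.re • y + c.im • I • y := by
      conv_lhs => rw [← Complex.re_add_im c, add_smul, mul_smul, Complex.coe_smul, Complex.coe_smul]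
    have hI (r : ℝ) (y : H) : I • r • y = r • I • y := smul_comm I r y
    simp only [RingHom.id_apply, hc, smul_add, smul_sub, map_add, map_smul, hI, I_smul_I_smul,
      map_neg]
    module
  cont := by fun_prop

theorem modularContraction_apply (x : H) : modularContraction 𝒦 x =
    x - 𝒦.starProjection x + I • 𝒦.starProjection (I • x) := rfl

theorem norm_modularContraction_le : ‖modularContraction 𝒦‖ ≤ 1 := by
  refine ContinuousLinearMap.opNorm_le_bound _ zero_le_one fun x ↦ ?_
  have h2 : (2 : ℝ) • modularContraction 𝒦 x = I • 𝒦.reflection (I • x) - 𝒦.reflection x := by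
    simp only [Submodule.reflection_apply, modularContraction_apply, smul_sub,
      I_smul_I_smul]
    module
  have h2n := norm_sub_le (I • 𝒦.reflection (I • x)) (𝒦.reflection x)
  rw [← h2, norm_smul, norm_smul, LinearIsometryEquiv.norm_map, LinearIsometryEquiv.norm_map,
    norm_smul, Complex.norm_I, Real.norm_ofNat] at h2n
  linarith

theorem isSelfAdjoint_modularContraction [CompleteSpace H] :
    IsSelfAdjoint (modularContraction 𝒦) := by
  have hP (x y : H) : (⟪𝒦.starProjection x, y⟫_ℂ).re = (⟪x, 𝒦.starProjection y⟫_ℂ).re :=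
    𝒦.inner_starProjection_left_eq_right x y
  refine ContinuousLinearMap.ext fun x ↦ ext_inner_right ℝ fun y ↦ ?_
  change (⟪star (modularContraction 𝒦) x, y⟫_ℂ).re = (⟪modularContraction 𝒦 x, y⟫_ℂ).re
  have hPI := hP (I • x) (I • y)
  simp only [ContinuousLinearMap.star_eq_adjoint, ContinuousLinearMap.adjoint_inner_left,
    modularContraction_apply, inner_add_left, inner_add_right, inner_sub_left, inner_sub_right,
    Complex.add_re, Complex.sub_re, hP x y, re_inner_I_smul_left, re_inner_I_smul_right] at hPI ⊢
  linarith

variable {𝒦}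

theorem inner_eq_zero_of_modularContraction_eq_self {x a : H} (hx : modularContraction 𝒦 x = x)
    (ha : a ∈ 𝒦) : ⟪a, x⟫_ℂ = 0 := by
  have hnorm (y : H) : (⟪𝒦.starProjection y, y⟫_ℂ).re = ‖𝒦.starProjection y‖ ^ 2 :=
    𝒦.re_inner_starProjection_eq_normSq y
  have hPx : 𝒦.starProjection x = I • 𝒦.starProjection (I • x) := by
    rw [modularContraction_apply, sub_add, sub_eq_self, sub_eq_zero] at hx
    exact hx
  have hsum : ‖𝒦.starProjection x‖ ^ 2 + ‖𝒦.starProjection (I • x)‖ ^ 2 = 0 := by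
    rw [← hnorm, ← hnorm, hPx, re_inner_I_smul_left, re_inner_I_smul_right, add_neg_cancel]
  have hzero (y : H) (hy : ‖𝒦.starProjection y‖ ^ 2 = 0) : (⟪a, y⟫_ℂ).re = 0 :=
    (Submodule.starProjection_apply_eq_zero_iff _).1 (by simpa using hy) a ha
  have hnn (y : H) : 0 ≤ ‖𝒦.starProjection y‖ ^ 2 := sq_nonneg _
  have hre := hzero x (by linarith [hnn x, hnn (I • x)])
  have him := hzero (I • x) (by linarith [hnn x, hnn (I • x)])
  rw [re_inner_I_smul_right, neg_eq_zero] at him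
  exact Complex.ext hre him

theorem re_apply_modularContraction_modularContraction {K : Type*} [NormedAddCommGroup K]
    [InnerProductSpace ℂ K] {ℒ : Submodule ℝ K} [ℒ.HasOrthogonalProjection] (f : H →ₗ[ℂ] K →ₗ[ℂ] ℂ)
    (hreal : ∀ a ∈ 𝒦, ∀ c ∈ ℒ, (f a c).im = 0)
    (himag : ∀ b ∈ symplecticComplement 𝒦, ∀ d ∈ symplecticComplement ℒ, (f b d).re = 0)
    (x : H) (y : K) :
    (f (modularContraction 𝒦 x) (modularContraction ℒ y)).re = -(f x y).re := by
  have him (x : H) (y : K) : (f (𝒦.starProjection x) (ℒ.starProjection y)).im = 0 :=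
    hreal _ (𝒦.starProjection_apply_mem x) _ (ℒ.starProjection_apply_mem y)
  have hre (x : H) (y : K) : (f (x - 𝒦.starProjection x) (y - ℒ.starProjection y)).re = 0 := by
    have hI := himag _ (I_smul_mem_symplecticComplement (𝒦.sub_starProjection_mem_orthogonal x)) _
      (I_smul_mem_symplecticComplement (ℒ.sub_starProjection_mem_orthogonal y))
    rwa [map_smul, map_smul, LinearMap.smul_apply, I_smul_I_smul, Complex.neg_re, neg_eq_zero] at hI
  have hre₁₁ := hre x y
  have hre₂₁ := hre (I • x) y
  have hre₁₂ := hre x (I • y)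
  have hre₂₂ := hre (I • x) (I • y)
  have him₂₁ := him (I • x) y
  have him₁₂ := him x (I • y)
  simp only [modularContraction_apply, map_add, map_sub, map_smul, LinearMap.add_apply,
    LinearMap.sub_apply, LinearMap.smul_apply, smul_eq_mul, Complex.add_re, Complex.sub_re,
    Complex.mul_re, Complex.add_im, Complex.sub_im, Complex.mul_im, Complex.I_re, Complex.I_im,
    zero_mul, one_mul, zero_add, zero_sub, neg_sub] at *
  linarith

theorem apply_modularContraction_modularContraction {K : Type*} [NormedAddCommGroup K]
    [InnerProductSpace ℂ K] {ℒ : Submodule ℝ K} [ℒ.HasOrthogonalProjection] (f : H →ₗ[ℂ] K →ₗ[ℂ] ℂ)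
    (hreal : ∀ a ∈ 𝒦, ∀ c ∈ ℒ, (f a c).im = 0)
    (himag : ∀ b ∈ symplecticComplement 𝒦, ∀ d ∈ symplecticComplement ℒ, (f b d).re = 0)
    (x : H) (y : K) :
    f (modularContraction 𝒦 x) (modularContraction ℒ y) = -f x y := by
  have hre := re_apply_modularContraction_modularContraction f hreal himag x y
  have him := re_apply_modularContraction_modularContraction f hreal himag (I • x) y
  exact Complex.ext (by simpa using hre) (neg_eq_iff_eq_neg.1 (by simpa using him))

theorem apply_apply_eq_self_of_comp_eq_neg [CompleteSpace H] {S T : H →L[ℂ] H}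
    (hS : IsSelfAdjoint S) (hS₁ : ‖S‖ ≤ 1) (hT₁ : ‖T‖ ≤ 1) {z : H} (hz : T (S z) = -z) :
    S (S z) = z := by
  have hle : ‖S (S z)‖ ≤ ‖S z‖ := (S.le_of_opNorm_le hS₁ _).trans_eq (one_mul _)
  have hge : ‖z‖ ≤ ‖S z‖ := by
    rw [← norm_neg, ← hz]
    exact (T.le_of_opNorm_le hT₁ _).trans_eq (one_mul _)
  have hinner : (⟪S (S z), z⟫_ℂ).re = ‖S z‖ ^ 2 := by
    rw [inner_apply_left_of_isSelfAdjoint hS]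
    exact inner_self_eq_norm_sq (𝕜 := ℂ) (S z)
  have hsub : ‖S (S z) - z‖ ^ 2 = ‖S (S z)‖ ^ 2 - 2 * ‖S z‖ ^ 2 + ‖z‖ ^ 2 := by
    rw [← hinner]
    exact norm_sub_sq (𝕜 := ℂ) _ _
  have hnonpos : ‖S (S z) - z‖ ^ 2 ≤ 0 := by
    nlinarith [norm_nonneg (S (S z)), norm_nonneg z]
  exact sub_eq_zero.1 (norm_eq_zero.1 (sq_nonpos_iff _ |>.1 hnonpos))

theorem inner_apply_eq_zero_of_apply_eq_self {G : Type*} [NormedAddCommGroup G]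
    [InnerProductSpace ℂ G] [CompleteSpace H] [CompleteSpace G] {A₁ : G →L[ℂ] G}
    (hA₁ : IsSelfAdjoint A₁) {φ : H →L[ℂ] G}
    (hφ : ∀ x, A₁ (φ x) = φ (modularContraction 𝒦 x)) {v : G} (hv : A₁ v = v) {a : H}
    (ha : a ∈ 𝒦) : ⟪v, φ a⟫_ℂ = 0 := by
  have hfix : modularContraction 𝒦 (adjoint φ v) = adjoint φ v := by
    refine ext_inner_right ℂ fun x ↦ ?_
    calc ⟪modularContraction 𝒦 (adjoint φ v), x⟫_ℂ
        = ⟪v, φ (modularContraction 𝒦 x)⟫_ℂ := by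
          rw [inner_apply_left_of_isSelfAdjoint (isSelfAdjoint_modularContraction 𝒦),
            ContinuousLinearMap.adjoint_inner_left]
      _ = ⟪v, φ x⟫_ℂ := by
          rw [← hφ, ← inner_apply_left_of_isSelfAdjoint hA₁, hv]
      _ = ⟪adjoint φ v, x⟫_ℂ := (ContinuousLinearMap.adjoint_inner_left φ x v).symm
  rw [← ContinuousLinearMap.adjoint_inner_left, ← inner_conj_symm,
    inner_eq_zero_of_modularContraction_eq_self hfix ha, map_zero]

theorem IsHilbertTensorProduct.inner_eq_zero_of_im_of_re {K HK : Type*}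
    [NormedAddCommGroup K] [InnerProductSpace ℂ K] [NormedAddCommGroup HK] [InnerProductSpace ℂ HK]
    [CompleteSpace H] [CompleteSpace K] [CompleteSpace HK] {tp : H →ₗ[ℂ] K →ₗ[ℂ] HK}
    (h : IsHilbertTensorProduct tp) {ℒ : Submodule ℝ K} [ℒ.HasOrthogonalProjection] {z : HK}
    (hreal : ∀ a ∈ 𝒦, ∀ c ∈ ℒ, (⟪z, tp a c⟫_ℂ).im = 0)
    (himag : ∀ b ∈ symplecticComplement 𝒦, ∀ d ∈ symplecticComplement ℒ, (⟪z, tp b d⟫_ℂ).re = 0)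
    {a : H} (ha : a ∈ 𝒦) {c : K} (hc : c ∈ ℒ) : ⟪z, tp a c⟫_ℂ = 0 := by
  set A := modularContraction 𝒦
  set B := modularContraction ℒ
  have hA : IsSelfAdjoint (h.map A 1) :=
    h.isSelfAdjoint_map (isSelfAdjoint_modularContraction 𝒦) (.one _)
  have hB : IsSelfAdjoint (h.map 1 B) :=
    h.isSelfAdjoint_map (.one _) (isSelfAdjoint_modularContraction ℒ)
  have hAn : ‖h.map A 1‖ ≤ 1 := (h.norm_map_le A 1).trans <|
    mul_le_one₀ (norm_modularContraction_le 𝒦) (norm_nonneg _) ContinuousLinearMap.norm_id_le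
  have hBn : ‖h.map 1 B‖ ≤ 1 := (h.norm_map_le 1 B).trans <|
    mul_le_one₀ ContinuousLinearMap.norm_id_le (norm_nonneg _) (norm_modularContraction_le ℒ)
  have hAB : h.map A 1 (h.map 1 B z) = -z := by
    refine h.eq_of_inner_left fun x y ↦ ?_
    rw [inner_apply_left_of_isSelfAdjoint hA, h.map_apply, inner_apply_left_of_isSelfAdjoint hB,
      h.map_apply, inner_neg_left]
    exact apply_modularContraction_modularContraction (tp.compr₂ (innerₛₗ ℂ z)) hreal himag x y
  have hBB := apply_apply_eq_self_of_comp_eq_neg hB hBn hAn hAB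
  have hcomm (w : HK) : h.map 1 B (h.map A 1 w) = h.map A 1 (h.map 1 B w) := by
    simp only [← mul_apply_eq_comp, h.map_mul_map, one_mul, mul_one]
  have hA_eq : h.map A 1 z = -h.map 1 B z := by
    rw [← map_neg, ← hAB, hcomm, hBB]
  have hAv : h.map A 1 (h.map A 1 z + z) = h.map A 1 z + z := by
    rw [map_add, add_comm, add_right_inj, hA_eq, map_neg, hAB, neg_neg]
  have hBv : h.map 1 B (h.map 1 B z + z) = h.map 1 B z + z := by
    rw [map_add, hBB, add_comm]
  have hAz :=
    inner_apply_eq_zero_of_apply_eq_self (φ := h.mkL.flip c) hA (fun x ↦ by simp [A]) hAv ha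
  have hBz := inner_apply_eq_zero_of_apply_eq_self (φ := h.mkL a) hB (fun y ↦ by simp [B]) hBv hc
  rw [ContinuousLinearMap.flip_apply, h.mkL_apply, inner_add_left, hA_eq, inner_neg_left] at hAz
  rw [h.mkL_apply, inner_add_left] at hBz
  linear_combination (hAz + hBz) / 2

end RealSubspace

section CommutationTheorem

open Complex (I)
open ContinuousLinearMap (adjoint)
open Set (image2 mem_image2_of_mem)

attribute [local instance] InnerProductSpace.complexToReal

variable {H : Type*} [NormedAddCommGroup H] [InnerProductSpace ℂ H] [CompleteSpace H]
  {S : StarSubalgebra ℂ (H →L[ℂ] H)} {M : VonNeumannAlgebra H} {ω u : H} {a : H →L[ℂ] H}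

theorem exists_vonNeumannAlgebra_coe_eq {s : Set (H →L[ℂ] H)}
    (hS : s.centralizer.centralizer = s) (hstar : ∀ a ∈ s, star a ∈ s) :
    ∃ M : VonNeumannAlgebra H, (M : Set (H →L[ℂ] H)) = s := by
  refine ⟨⟨⟨Subalgebra.centralizer ℂ s.centralizer, fun {a} ha ↦ ?_⟩, ?_⟩, hS⟩
  · exact hS.ge (hstar a (hS.le ha))
  · exact Set.centralizer_centralizer_centralizer _

/-- The closure of the orbit `{a ω | a ∈ S}`. -/
def cyclicSubspace (S : StarSubalgebra ℂ (H →L[ℂ] H)) (ω : H) : Submodule ℂ H :=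
  (S.toSubmodule.map (ContinuousLinearMap.apply ℂ H ω).toLinearMap).topologicalClosure

theorem apply_mem_cyclicSubspace (ha : a ∈ S) : a ω ∈ cyclicSubspace S ω :=
  Submodule.le_topologicalClosure _ ⟨a, ha, rfl⟩

theorem self_mem_cyclicSubspace : ω ∈ cyclicSubspace S ω :=
  apply_mem_cyclicSubspace (one_mem S)

theorem isClosed_cyclicSubspace : IsClosed (cyclicSubspace S ω : Set H) :=
  Submodule.isClosed_topologicalClosure _

instance : (cyclicSubspace S ω).HasOrthogonalProjection :=
  have : CompleteSpace (cyclicSubspace S ω) := isClosed_cyclicSubspace.completeSpace_coe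
  inferInstance

theorem cyclicSubspace_le {p : Submodule ℂ H} (hp : IsClosed (p : Set H)) (hS : ∀ a ∈ S, a ω ∈ p) :
    cyclicSubspace S ω ≤ p := by
  refine Submodule.topologicalClosure_minimal _ ?_ hp
  rintro _ ⟨a, ha, rfl⟩
  exact hS a ha

theorem cyclicSubspace_mem_invtSubmodule (ha : a ∈ S) :
    cyclicSubspace S ω ∈ Module.End.invtSubmodule a.toLinearMap :=
  cyclicSubspace_le (isClosed_cyclicSubspace.preimage a.continuous) fun _ hb ↦
    apply_mem_cyclicSubspace (mul_mem ha hb)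

theorem commute_starProjection_cyclicSubspace (ha : a ∈ S) :
    Commute (cyclicSubspace S ω).starProjection a := by
  rw [ContinuousLinearMap.IsIdempotentElem.commute_iff
      isStarProjection_starProjection.isIdempotentElem,
    Submodule.range_starProjection, Submodule.ker_starProjection]
  exact ⟨cyclicSubspace_mem_invtSubmodule ha, ContinuousLinearMap.orthogonal_mem_invtSubmodule
    (cyclicSubspace_mem_invtSubmodule (star_mem ha))⟩

theorem starProjection_cyclicSubspace_mem_commutant :
    (cyclicSubspace M.toStarSubalgebra ω).starProjection ∈ M.commutant :=
  VonNeumannAlgebra.mem_commutant_iff.2 fun _ hg ↦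
    (commute_starProjection_cyclicSubspace (S := M.toStarSubalgebra) hg).symm.eq

/-- The real subspace `{a ω | a ∈ S, a = a*}`. -/
def selfAdjointOrbit (S : StarSubalgebra ℂ (H →L[ℂ] H)) (ω : H) : Submodule ℝ H :=
  (S.toSubmodule.restrictScalars ℝ ⊓ selfAdjoint.submodule ℝ (H →L[ℂ] H)).map
    ((ContinuousLinearMap.apply ℂ H ω).toLinearMap.restrictScalars ℝ)

theorem mem_selfAdjointOrbit {x : H} :
    x ∈ selfAdjointOrbit S ω ↔ ∃ a ∈ S, IsSelfAdjoint a ∧ a ω = x :=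
  ⟨fun ⟨a, ⟨ha, has⟩, hax⟩ ↦ ⟨a, ha, has, hax⟩, fun ⟨a, ha, has, hax⟩ ↦ ⟨a, ⟨ha, has⟩, hax⟩⟩

theorem exists_isSelfAdjoint_add_I_smul (ha : a ∈ S) :
    ∃ b ∈ S, ∃ c ∈ S, IsSelfAdjoint b ∧ IsSelfAdjoint c ∧ b + I • c = a := by
  have hstar : star a ∈ S := star_mem ha
  refine ⟨_, ?_, _, ?_, (realPart a).2, (imaginaryPart a).2, realPart_add_I_smul_imaginaryPart a⟩
  · rw [realPart_apply_coe]
    exact (S.toSubmodule.restrictScalars ℝ).smul_mem _ (S.add_mem ha hstar)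
  · rw [imaginaryPart_apply_coe]
    exact S.smul_mem
      ((S.toSubmodule.restrictScalars ℝ).smul_mem _ (S.toSubmodule.sub_mem ha hstar)) _

theorem cyclicSubspace_le_of_selfAdjointOrbit_le {p : Submodule ℂ H} (hp : IsClosed (p : Set H))
    (hS : selfAdjointOrbit S ω ≤ p.restrictScalars ℝ) : cyclicSubspace S ω ≤ p := by
  refine cyclicSubspace_le hp fun a ha ↦ ?_
  obtain ⟨b, hb, c, hc, hbs, hcs, rfl⟩ := exists_isSelfAdjoint_add_I_smul ha
  exact p.add_mem (hS (mem_selfAdjointOrbit.2 ⟨b, hb, hbs, rfl⟩))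
    (p.smul_mem I (hS (mem_selfAdjointOrbit.2 ⟨c, hc, hcs, rfl⟩)))

theorem inner_apply_eq_of_im_inner_eq_zero
    (him : ∀ x ∈ selfAdjointOrbit S ω, (⟪x, u⟫_ℂ).im = 0) (ha : a ∈ S) :
    ⟪a ω, u⟫_ℂ = ⟪a u, ω⟫_ℂ := by
  have hsa {b : H →L[ℂ] H} (hb : b ∈ S) (hbs : IsSelfAdjoint b) : ⟪b ω, u⟫_ℂ = ⟪b u, ω⟫_ℂ := by
    have hreal := Complex.conj_eq_iff_im.2 (him _ (mem_selfAdjointOrbit.2 ⟨b, hb, hbs, rfl⟩))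
    rw [inner_apply_left_of_isSelfAdjoint hbs u, ← inner_conj_symm u, hreal]
  obtain ⟨b, hb, c, hc, hbs, hcs, rfl⟩ := exists_isSelfAdjoint_add_I_smul ha
  simp only [add_apply, smul_apply, inner_add_left, inner_smul_left, hsa hb hbs, hsa hc hcs]

theorem inner_apply_eq_neg_of_re_inner_eq_zero
    (hre : ∀ x ∈ selfAdjointOrbit S ω, (⟪x, u⟫_ℂ).re = 0) (ha : a ∈ S) :
    ⟪a ω, u⟫_ℂ = -⟪a u, ω⟫_ℂ := by
  have hI := inner_apply_eq_of_im_inner_eq_zero (u := I • u)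
    (fun x hx ↦ by rw [im_inner_I_smul_right, hre x hx]) ha
  rw [inner_smul_right, map_smul, inner_smul_left, Complex.conj_I, neg_mul, ← mul_neg] at hI
  exact mul_left_cancel₀ Complex.I_ne_zero hI

/-- The representation `b ↦ b ⊕ b` of the bounded operators on `H` on the Hilbert space sum
`H ⊕ H`. -/
def amplification : (H →L[ℂ] H) →⋆ₐ[ℂ] (WithLp 2 (H × H) →L[ℂ] WithLp 2 (H × H)) where
  toFun b := (WithLp.prodContinuousLinearEquiv 2 ℂ H H).symm.toContinuousLinearMap ∘L
    b.prodMap b ∘L (WithLp.prodContinuousLinearEquiv 2 ℂ H H).toContinuousLinearMap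
  map_one' := rfl
  map_mul' _ _ := rfl
  map_zero' := rfl
  map_add' _ _ := rfl
  commutes' _ := rfl
  map_star' b := by
    refine (ContinuousLinearMap.eq_adjoint_iff _ _).2 fun x y ↦ ?_
    simp [WithLp.prod_inner_apply, ContinuousLinearMap.star_eq_adjoint,
      ContinuousLinearMap.adjoint_inner_left]

theorem amplification_apply (b : H →L[ℂ] H) (x : WithLp 2 (H × H)) :
    amplification b x = WithLp.toLp 2 (b x.fst, b x.snd) := rfl

theorem adjoint_fstL_apply (x : H) :
    adjoint (WithLp.fstL 2 ℂ H H) x = WithLp.toLp 2 (x, 0) :=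
  ext_inner_right ℂ fun y ↦ by
    simp [ContinuousLinearMap.adjoint_inner_left, WithLp.prod_inner_apply]

theorem adjoint_sndL_apply (x : H) :
    adjoint (WithLp.sndL 2 ℂ H H) x = WithLp.toLp 2 (0, x) :=
  ext_inner_right ℂ fun y ↦ by
    simp [ContinuousLinearMap.adjoint_inner_left, WithLp.prod_inner_apply]

theorem fstL_comp_comp_mem {e : WithLp 2 (H × H) →L[ℂ] WithLp 2 (H × H)}
    (he : ∀ b ∈ M.commutant, Commute e (amplification b)) {J : H →L[ℂ] WithLp 2 (H × H)}
    (hJ : ∀ b x, amplification b (J x) = J (b x)) : WithLp.fstL 2 ℂ H H ∘L e ∘L J ∈ M := by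
  rw [← M.commutant_commutant, VonNeumannAlgebra.mem_commutant_iff]
  refine fun b hb ↦ ContinuousLinearMap.ext fun x ↦ ?_
  have hx : e (J (b x)) = amplification b (e (J x)) := by
    rw [← hJ]
    exact congr($((he b hb).eq) (J x))
  exact congr(($hx).fst).symm

theorem comp_comp_adjoint_mem_Icc {E : Type*} [NormedAddCommGroup E] [InnerProductSpace ℂ E]
    [CompleteSpace E] {e : E →L[ℂ] E} (he : IsStarProjection e) {φ : E →L[ℂ] H}
    (hφ : φ ∘L adjoint φ = 1) : φ ∘L e ∘L adjoint φ ∈ Set.Icc 0 1 := by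
  have hsub : 1 - φ ∘L e ∘L adjoint φ = φ ∘L (1 - e) ∘L adjoint φ := by
    rw [← hφ]
    ext
    simp
  rw [Set.mem_Icc, ContinuousLinearMap.nonneg_iff_isPositive, ContinuousLinearMap.le_def, hsub]
  exact ⟨(ContinuousLinearMap.IsPositive.of_isStarProjection he).conj_adjoint φ,
    (ContinuousLinearMap.IsPositive.of_isStarProjection he.one_sub).conj_adjoint φ⟩

theorem exists_mem_apply_add_apply {x y : H}
    (h : ∀ b ∈ M.commutant, ⟪b ω, x⟫_ℂ + ⟪b u, y⟫_ℂ = 0) :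
    ∃ p ∈ M, ∃ q ∈ M, 0 ≤ p ∧ p ≤ 1 ∧ p ω + q u = ω ∧ p x + q y = 0 := by
  set π := WithLp.fstL 2 ℂ H H
  set ι₁ := adjoint π
  set ι₂ := adjoint (WithLp.sndL 2 ℂ H H)
  set F := cyclicSubspace (M.commutant.toStarSubalgebra.map amplification) (WithLp.toLp 2 (ω, u))
  set e := F.starProjection
  have hι₁ (v : H) : ι₁ v = WithLp.toLp 2 (v, 0) := adjoint_fstL_apply v
  have hι₂ (v : H) : ι₂ v = WithLp.toLp 2 (0, v) := adjoint_sndL_apply v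
  have he (b : H →L[ℂ] H) (hb : b ∈ M.commutant) : Commute e (amplification b) :=
    commute_starProjection_cyclicSubspace ⟨b, hb, rfl⟩
  have hadd (v w : H) : (π ∘L e ∘L ι₁) v + (π ∘L e ∘L ι₂) w = π (e (WithLp.toLp 2 (v, w))) := by
    have hvw : ι₁ v + ι₂ w = WithLp.toLp 2 (v, w) := by
      rw [hι₁, hι₂, ← WithLp.toLp_add, Prod.mk_add_mk, add_zero, zero_add]
    simp only [← hvw, ContinuousLinearMap.comp_apply, map_add]
  have horth : F ≤ (ℂ ∙ WithLp.toLp 2 (x, y))ᗮ := by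
    refine cyclicSubspace_le (Submodule.isClosed_orthogonal _) ?_
    rintro _ ⟨b, hb, rfl⟩
    rw [Submodule.mem_orthogonal_singleton_iff_inner_left, WithLp.prod_inner_apply]
    exact h b hb
  obtain ⟨hp₀, hp₁⟩ := comp_comp_adjoint_mem_Icc (φ := π) (e := e) isStarProjection_starProjection
    (ContinuousLinearMap.ext fun v ↦ congrArg π (hι₁ v))
  refine ⟨π ∘L e ∘L ι₁, fstL_comp_comp_mem he fun b v ↦ ?_,
    π ∘L e ∘L ι₂, fstL_comp_comp_mem he fun b v ↦ ?_, hp₀, hp₁, ?_, ?_⟩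
  · simp [hι₁, amplification_apply]
  · simp [hι₂, amplification_apply]
  · rw [hadd, Submodule.starProjection_eq_self_iff.2 self_mem_cyclicSubspace]
    rfl
  · rw [hadd, (Submodule.starProjection_apply_eq_zero_iff F).2 <|
      Submodule.le_orthogonal_iff_le_orthogonal.1 horth <| Submodule.mem_span_singleton_self _,
      map_zero]

theorem eq_zero_of_im_inner_of_re_inner (hu : u ∈ cyclicSubspace M.toStarSubalgebra ω)
    (him : ∀ x ∈ selfAdjointOrbit M.toStarSubalgebra ω, (⟪x, u⟫_ℂ).im = 0)
    (hre : ∀ x ∈ selfAdjointOrbit M.commutant.toStarSubalgebra ω, (⟪x, u⟫_ℂ).re = 0) :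
    u = 0 := by
  have hM {a : H →L[ℂ] H} (ha : a ∈ M) : ⟪a ω, u⟫_ℂ = ⟪a u, ω⟫_ℂ :=
    inner_apply_eq_of_im_inner_eq_zero him ha
  have hM' {b : H →L[ℂ] H} (hb : b ∈ M.commutant) : ⟪b ω, u⟫_ℂ = -⟪b u, ω⟫_ℂ :=
    inner_apply_eq_neg_of_re_inner_eq_zero hre hb
  obtain ⟨p, hp, q, hq, hp0, hp1, hω, hu0⟩ := exists_mem_apply_add_apply (M := M) (x := u) (y := ω)
    fun b hb ↦ by rw [hM' hb, neg_add_cancel]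
  have hkey : ⟪p u, u⟫_ℂ + ⟪(1 - p) ω, ω⟫_ℂ = 0 := by
    have hqu : q u = (1 - p) ω := eq_sub_of_add_eq' hω
    rw [eq_neg_of_add_eq_zero_left hu0, inner_neg_left, hM hq, hqu, neg_add_cancel]
  have hpos {T : H →L[ℂ] H} (hT : 0 ≤ T) (x : H) : 0 ≤ ⟪T x, x⟫_ℂ :=
    ((ContinuousLinearMap.nonneg_iff_isPositive T).1 hT).inner_nonneg_left x
  obtain ⟨hpu, hpω⟩ := (add_eq_zero_iff_of_nonneg (hpos hp0 u) (hpos (sub_nonneg.2 hp1) ω)).1 hkey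
  replace hpu : p u = 0 := apply_eq_zero_of_inner_apply_self_eq_zero hp0 hpu
  replace hpω : p ω = ω :=
    (sub_eq_zero.1 (apply_eq_zero_of_inner_apply_self_eq_zero (sub_nonneg.2 hp1) hpω)).symm
  have horth : cyclicSubspace M.toStarSubalgebra ω ≤ (ℂ ∙ u)ᗮ := by
    refine cyclicSubspace_le (Submodule.isClosed_orthogonal _) fun a ha ↦ ?_
    rw [Submodule.mem_orthogonal_singleton_iff_inner_left]
    simpa [hpu, hpω] using hM (mul_mem ha hp)
  exact inner_self_eq_zero.1 (Submodule.mem_orthogonal_singleton_iff_inner_left.1 (horth hu))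

theorem selfAdjointOrbit_le_cyclicSubspace :
    selfAdjointOrbit S ω ≤ (cyclicSubspace S ω).restrictScalars ℝ := by
  intro x hx
  obtain ⟨a, ha, -, rfl⟩ := mem_selfAdjointOrbit.1 hx
  exact apply_mem_cyclicSubspace ha

theorem selfAdjointOrbit_commutant_le_symplecticComplement :
    selfAdjointOrbit M.commutant.toStarSubalgebra ω ≤
      symplecticComplement (selfAdjointOrbit M.toStarSubalgebra ω) := by
  intro y hy x hx
  obtain ⟨b, hb, hbs, rfl⟩ := mem_selfAdjointOrbit.1 hy
  obtain ⟨a, ha, has, rfl⟩ := mem_selfAdjointOrbit.1 hx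
  exact im_inner_apply_apply_of_commute has hbs (VonNeumannAlgebra.mem_commutant_iff.1 hb a ha) ω

variable (M ω) in
/-- The vectors `b ω` in the cyclic subspace of `M` at `ω` with `b` a self-adjoint element of the
commutant: the self-adjoint orbit of the corner `e M' e`, where `e` projects onto that subspace. -/
def cornerOrbit : Submodule ℝ H :=
  selfAdjointOrbit M.commutant.toStarSubalgebra ω ⊓
    (cyclicSubspace M.toStarSubalgebra ω).restrictScalars ℝ

theorem starProjection_apply_mem_cornerOrbit {x : H}
    (hx : x ∈ selfAdjointOrbit M.commutant.toStarSubalgebra ω) :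
    (cyclicSubspace M.toStarSubalgebra ω).starProjection x ∈ cornerOrbit M ω := by
  obtain ⟨b, hb, hbs, rfl⟩ := mem_selfAdjointOrbit.1 hx
  have he : (cyclicSubspace M.toStarSubalgebra ω).starProjection ∈ M.commutant :=
    starProjection_cyclicSubspace_mem_commutant
  have hω : (cyclicSubspace M.toStarSubalgebra ω).starProjection ω = ω :=
    Submodule.starProjection_eq_self_iff.2 self_mem_cyclicSubspace
  have hebe := hbs.conjugate_self (isStarProjection_starProjection
    (U := cyclicSubspace M.toStarSubalgebra ω)).isSelfAdjoint
  refine Submodule.mem_inf.2 ⟨mem_selfAdjointOrbit.2 ⟨_, mul_mem (mul_mem he hb) he, hebe, ?_⟩, ?_⟩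
  · rw [mul_apply_eq_comp, mul_apply_eq_comp, hω]
  · rw [Submodule.restrictScalars_mem]
    exact Submodule.starProjection_apply_mem _ _

theorem mem_topologicalClosure_cornerOrbit (hu : u ∈ cyclicSubspace M.toStarSubalgebra ω)
    (hus : u ∈ symplecticComplement (selfAdjointOrbit M.toStarSubalgebra ω)) :
    u ∈ (cornerOrbit M ω).topologicalClosure := by
  set ℬ := (cornerOrbit M ω).topologicalClosure
  set F := cyclicSubspace M.toStarSubalgebra ω
  have hℬF : ℬ ≤ F.restrictScalars ℝ :=
    Submodule.topologicalClosure_minimal _ inf_le_right isClosed_cyclicSubspace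
  have hℬs : ℬ ≤ symplecticComplement (selfAdjointOrbit M.toStarSubalgebra ω) :=
    Submodule.topologicalClosure_minimal _
      (inf_le_left.trans selfAdjointOrbit_commutant_le_symplecticComplement)
      isClosed_symplecticComplement
  have hPu : ℬ.starProjection u ∈ ℬ := Submodule.starProjection_apply_mem _ _
  have hvF : u - ℬ.starProjection u ∈ F := F.sub_mem hu (hℬF hPu)
  have hv : u - ℬ.starProjection u = 0 := by
    refine eq_zero_of_im_inner_of_re_inner hvF (Submodule.sub_mem _ hus (hℬs hPu)) fun x hx ↦ ?_
    rw [← Submodule.starProjection_eq_self_iff.2 hvF,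
      ← Submodule.inner_starProjection_left_eq_right]
    exact (Submodule.mem_orthogonal _ _).1 (Submodule.sub_starProjection_mem_orthogonal u) _
      (Submodule.le_topologicalClosure _ (starProjection_apply_mem_cornerOrbit hx))
  rw [sub_eq_zero.1 hv]
  exact hPu

theorem starProjection_mem_topologicalClosure_cornerOrbit {b : H}
    (hb : b ∈ symplecticComplement (selfAdjointOrbit M.toStarSubalgebra ω)) :
    (cyclicSubspace M.toStarSubalgebra ω).starProjection b ∈
      (cornerOrbit M ω).topologicalClosure := by
  refine mem_topologicalClosure_cornerOrbit (Submodule.starProjection_apply_mem _ _) fun x hx ↦ ?_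
  rw [← Submodule.inner_starProjection_left_eq_right,
    Submodule.starProjection_eq_self_iff.2
      ((Submodule.restrictScalars_mem ℝ _ _).1 (selfAdjointOrbit_le_cyclicSubspace hx))]
  exact hb x hx

namespace IsHilbertTensorProduct

variable {K HK : Type*}
  [NormedAddCommGroup K] [InnerProductSpace ℂ K] [CompleteSpace K]
  [NormedAddCommGroup HK] [InnerProductSpace ℂ HK]
  {tp : H →ₗ[ℂ] K →ₗ[ℂ] HK} {N : VonNeumannAlgebra K} {ω₁ : H} {ω₂ : K} {X Y : HK →L[ℂ] HK}

theorem inner_apply_eq_zero_of_selfAdjointOrbit (h : IsHilbertTensorProduct tp)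
    {T : StarSubalgebra ℂ (K →L[ℂ] K)} {z : HK}
    (hz : ∀ a ∈ selfAdjointOrbit S ω₁, ∀ c ∈ selfAdjointOrbit T ω₂, ⟪z, tp a c⟫_ℂ = 0)
    {x : H} (hx : x ∈ cyclicSubspace S ω₁) {y : K} (hy : y ∈ cyclicSubspace T ω₂) :
    ⟪z, tp x y⟫_ℂ = 0 := by
  have hleft {c : K} (hc : c ∈ selfAdjointOrbit T ω₂) : ⟪z, tp x c⟫_ℂ = 0 :=
    cyclicSubspace_le_of_selfAdjointOrbit_le
      (p := (innerSL ℂ z ∘L h.mkL.flip c).ker) (ContinuousLinearMap.isClosed_ker _)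
      (fun a ha ↦ hz a ha c hc) hx
  exact cyclicSubspace_le_of_selfAdjointOrbit_le
    (p := (innerSL ℂ z ∘L h.mkL x).ker) (ContinuousLinearMap.isClosed_ker _)
    (fun c hc ↦ hleft hc) hy

/-- The closed real span of the elementary tensors of corner orbits. -/
def cornerTensorOrbit (tp : H →ₗ[ℂ] K →ₗ[ℂ] HK) (M : VonNeumannAlgebra H)
    (N : VonNeumannAlgebra K) (ω₁ : H) (ω₂ : K) : Submodule ℝ HK :=
  (Submodule.span ℝ (image2 (tp · ·) (cornerOrbit M ω₁) (cornerOrbit N ω₂))).topologicalClosure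

theorem apply_mem_cornerTensorOrbit {b : H} (hb : b ∈ cornerOrbit M ω₁) {d : K}
    (hd : d ∈ cornerOrbit N ω₂) : tp b d ∈ cornerTensorOrbit tp M N ω₁ ω₂ :=
  Submodule.le_topologicalClosure _ (Submodule.subset_span (mem_image2_of_mem hb hd))

theorem cornerTensorOrbit_le {p : Submodule ℝ HK} (hp : IsClosed (p : Set HK))
    (h : ∀ b ∈ cornerOrbit M ω₁, ∀ d ∈ cornerOrbit N ω₂, tp b d ∈ p) :
    cornerTensorOrbit tp M N ω₁ ω₂ ≤ p := by
  refine Submodule.topologicalClosure_minimal _ (Submodule.span_le.2 ?_) hp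
  rintro _ ⟨b, hb, d, hd, rfl⟩
  exact h b hb d hd

theorem im_inner_eq_zero_of_mem_cornerTensorOrbit (h : IsHilbertTensorProduct tp) {v : HK}
    (hv : v ∈ cornerTensorOrbit tp M N ω₁ ω₂) {a : H}
    (ha : a ∈ selfAdjointOrbit M.toStarSubalgebra ω₁) {c : K}
    (hc : c ∈ selfAdjointOrbit N.toStarSubalgebra ω₂) : (⟪tp a c, v⟫_ℂ).im = 0 := by
  have hle : cornerTensorOrbit tp M N ω₁ ω₂ ≤ symplecticComplement (ℝ ∙ tp a c) := by
    refine cornerTensorOrbit_le isClosed_symplecticComplement fun b hb d hd ↦ ?_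
    intro w hw
    obtain ⟨r, rfl⟩ := Submodule.mem_span_singleton.1 hw
    have hab := selfAdjointOrbit_commutant_le_symplecticComplement hb.1 a ha
    have hcd := selfAdjointOrbit_commutant_le_symplecticComplement hd.1 c hc
    rw [inner_smul_left_eq_smul, h.inner_apply_apply, Complex.smul_im, Complex.mul_im, hab, hcd]
    simp
  exact hle hv _ (Submodule.mem_span_singleton_self _)

variable [CompleteSpace HK]

instance : (cornerTensorOrbit tp M N ω₁ ω₂).HasOrthogonalProjection :=
  inferInstanceAs (Submodule.topologicalClosure _).HasOrthogonalProjection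

theorem inner_map_apply_apply (h : IsHilbertTensorProduct tp) {e : H →L[ℂ] H} {f : K →L[ℂ] K}
    (he : IsSelfAdjoint e) (hf : IsSelfAdjoint f) (z : HK) (x : H) (y : K) :
    ⟪h.map e f z, tp x y⟫_ℂ = ⟪z, tp (e x) (f y)⟫_ℂ := by
  rw [inner_apply_left_of_isSelfAdjoint (h.isSelfAdjoint_map he hf), h.map_apply]

theorem inner_eq_zero_of_mem_cyclicSubspace (h : IsHilbertTensorProduct tp) {z : HK}
    (him : ∀ a ∈ selfAdjointOrbit M.toStarSubalgebra ω₁,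
      ∀ c ∈ selfAdjointOrbit N.toStarSubalgebra ω₂, (⟪z, tp a c⟫_ℂ).im = 0)
    (hre : ∀ b ∈ cornerOrbit M ω₁, ∀ d ∈ cornerOrbit N ω₂, (⟪z, tp b d⟫_ℂ).re = 0)
    {x : H} (hx : x ∈ cyclicSubspace M.toStarSubalgebra ω₁)
    {y : K} (hy : y ∈ cyclicSubspace N.toStarSubalgebra ω₂) : ⟪z, tp x y⟫_ℂ = 0 := by
  set E := cyclicSubspace M.toStarSubalgebra ω₁
  set F := cyclicSubspace N.toStarSubalgebra ω₂
  have hg (v : H) (w : K) := h.inner_map_apply_apply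
    (isStarProjection_starProjection (U := E)).isSelfAdjoint
    (isStarProjection_starProjection (U := F)).isSelfAdjoint z v w
  have hgz {v : H} (hv : v ∈ E) {w : K} (hw : w ∈ F) :
      ⟪h.map E.starProjection F.starProjection z, tp v w⟫_ℂ = ⟪z, tp v w⟫_ℂ := by
    rw [hg, Submodule.starProjection_eq_self_iff.2 hv, Submodule.starProjection_eq_self_iff.2 hw]
  rw [← hgz hx hy]
  refine h.inner_apply_eq_zero_of_selfAdjointOrbit (fun a ha c hc ↦
    h.inner_eq_zero_of_im_of_re
      (𝒦 := (selfAdjointOrbit M.toStarSubalgebra ω₁).topologicalClosure)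
      (ℒ := (selfAdjointOrbit N.toStarSubalgebra ω₂).topologicalClosure)
      (fun a ha c hc ↦ ?_) (fun b hb d hd ↦ ?_)
      (Submodule.le_topologicalClosure _ ha) (Submodule.le_topologicalClosure _ hc)) hx hy
  · refine h.inner_apply_mem_of_mem_closure (C := {w | w.im = 0})
      (isClosed_eq Complex.continuous_im continuous_const) (fun a ha c hc ↦ ?_) ha hc
    rw [hgz (selfAdjointOrbit_le_cyclicSubspace ha) (selfAdjointOrbit_le_cyclicSubspace hc)]
    exact him a ha c hc
  · rw [hg]
    refine h.inner_apply_mem_of_mem_closure (C := {w | w.re = 0})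
      (isClosed_eq Complex.continuous_re continuous_const) hre
      (starProjection_mem_topologicalClosure_cornerOrbit fun a ha ↦ hb a ?_)
      (starProjection_mem_topologicalClosure_cornerOrbit fun c hc ↦ hd c ?_)
    exacts [Submodule.le_topologicalClosure _ ha, Submodule.le_topologicalClosure _ hc]

theorem im_inner_apply_eq_zero_of_isSelfAdjoint (h : IsHilbertTensorProduct tp)
    (hX : IsSelfAdjoint X) (hXMN : X ∈ (image2 (h.map · ·) (M : Set (H →L[ℂ] H)) N).centralizer)
    {a : H} (ha : a ∈ selfAdjointOrbit M.toStarSubalgebra ω₁) {c : K}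
    (hc : c ∈ selfAdjointOrbit N.toStarSubalgebra ω₂) : (⟪X (tp ω₁ ω₂), tp a c⟫_ℂ).im = 0 := by
  obtain ⟨a, haM, has, rfl⟩ := mem_selfAdjointOrbit.1 ha
  obtain ⟨c, hcN, hcs, rfl⟩ := mem_selfAdjointOrbit.1 hc
  rw [← h.map_apply]
  exact im_inner_apply_apply_of_commute hX (h.isSelfAdjoint_map has hcs)
    (hXMN _ (mem_image2_of_mem haM hcN)).symm _

theorem eq_zero_of_map_starProjection_apply_eq_self (h : IsHilbertTensorProduct tp) {z : HK}
    (hz : h.map (cyclicSubspace M.toStarSubalgebra ω₁).starProjection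
      (cyclicSubspace N.toStarSubalgebra ω₂).starProjection z = z)
    (him : ∀ a ∈ selfAdjointOrbit M.toStarSubalgebra ω₁,
      ∀ c ∈ selfAdjointOrbit N.toStarSubalgebra ω₂, (⟪z, tp a c⟫_ℂ).im = 0)
    (hre : ∀ b ∈ cornerOrbit M ω₁, ∀ d ∈ cornerOrbit N ω₂, (⟪z, tp b d⟫_ℂ).re = 0) : z = 0 :=
  h.eq_of_inner_left fun x y ↦ by
    rw [inner_zero_left, ← hz, h.inner_map_apply_apply
      isStarProjection_starProjection.isSelfAdjoint isStarProjection_starProjection.isSelfAdjoint]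
    exact h.inner_eq_zero_of_mem_cyclicSubspace him hre
      (Submodule.starProjection_apply_mem _ _) (Submodule.starProjection_apply_mem _ _)

theorem map_starProjection_apply_mem_cornerTensorOrbit (h : IsHilbertTensorProduct tp)
    (hX : IsSelfAdjoint X) (hXMN : X ∈ (image2 (h.map · ·) (M : Set (H →L[ℂ] H)) N).centralizer) :
    h.map (cyclicSubspace M.toStarSubalgebra ω₁).starProjection
        (cyclicSubspace N.toStarSubalgebra ω₂).starProjection (X (tp ω₁ ω₂)) ∈
      cornerTensorOrbit tp M N ω₁ ω₂ := by
  set E := cyclicSubspace M.toStarSubalgebra ω₁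
  set F := cyclicSubspace N.toStarSubalgebra ω₂
  set ℒ := cornerTensorOrbit tp M N ω₁ ω₂
  set g := h.map E.starProjection F.starProjection
  set v := g (X (tp ω₁ ω₂))
  have hg : IsSelfAdjoint g := h.isSelfAdjoint_map
    isStarProjection_starProjection.isSelfAdjoint isStarProjection_starProjection.isSelfAdjoint
  have hPv : ℒ.starProjection v ∈ ℒ := Submodule.starProjection_apply_mem _ _
  have hgtp {x : H} (hx : x ∈ E) {y : K} (hy : y ∈ F) : g (tp x y) = tp x y := by
    rw [h.map_apply, Submodule.starProjection_eq_self_iff.2 hx,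
      Submodule.starProjection_eq_self_iff.2 hy]
  have hgP : g (ℒ.starProjection v) = ℒ.starProjection v :=
    sub_eq_zero.1 <| cornerTensorOrbit_le (p := ((g - 1).ker).restrictScalars ℝ)
      (g - 1).isClosed_ker (fun b hb d hd ↦ sub_eq_zero.2 (hgtp hb.2 hd.2)) hPv
  have hgv : g v = v := by
    have hE := isStarProjection_starProjection (U := E).isIdempotentElem.eq
    have hF := isStarProjection_starProjection (U := F).isIdempotentElem.eq
    rw [← mul_apply_eq_comp, h.map_mul_map, hE, hF]
  have hz : v - ℒ.starProjection v = 0 := by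
    refine h.eq_zero_of_map_starProjection_apply_eq_self (M := M) (N := N) (ω₁ := ω₁) (ω₂ := ω₂)
      ?_ (fun a ha c hc ↦ ?_) fun b hb d hd ↦ ?_
    · rw [map_sub]
      exact congrArg₂ (· - ·) hgv hgP
    · have hgac : g (tp a c) = tp a c :=
        hgtp (selfAdjointOrbit_le_cyclicSubspace ha) (selfAdjointOrbit_le_cyclicSubspace hc)
      rw [inner_sub_left, Complex.sub_im, ← inner_conj_symm (ℒ.starProjection v), Complex.conj_im,
        h.im_inner_eq_zero_of_mem_cornerTensorOrbit hPv ha hc, inner_apply_left_of_isSelfAdjoint hg,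
        hgac, h.im_inner_apply_eq_zero_of_isSelfAdjoint hX hXMN ha hc, neg_zero, sub_zero]
    · exact (Submodule.mem_orthogonal' _ _).1 (Submodule.sub_starProjection_mem_orthogonal v) _
        (apply_mem_cornerTensorOrbit hb hd)
  rw [sub_eq_zero.1 hz]
  exact hPv

theorem inner_apply_eq_of_mem_cornerTensorOrbit (h : IsHilbertTensorProduct tp)
    (hY : Y ∈ (image2 (h.map · ·) (M.commutant : Set (H →L[ℂ] H)) N.commutant).centralizer)
    {v : HK} (hv : v ∈ cornerTensorOrbit tp M N ω₁ ω₂) :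
    ⟪Y (tp ω₁ ω₂), v⟫_ℂ = ⟪Y v, tp ω₁ ω₂⟫_ℂ := by
  set ω := tp ω₁ ω₂
  let p : Submodule ℝ HK :=
    { carrier := {v | ⟪Y ω, v⟫_ℂ = ⟪Y v, ω⟫_ℂ}
      zero_mem' := by simp
      add_mem' hv hw := by
        rw [Set.mem_ofPred_eq] at hv hw ⊢
        rw [map_add, inner_add_left, inner_add_right, hv, hw]
      smul_mem' r v hv := by
        rw [Set.mem_ofPred_eq] at hv ⊢
        rw [Y.map_smul_of_tower, inner_smul_left_eq_smul, inner_smul_right_eq_smul, hv] }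
  have hp : IsClosed (p : Set HK) :=
    isClosed_eq (f := fun v ↦ ⟪Y ω, v⟫_ℂ) (g := fun v ↦ ⟪Y v, ω⟫_ℂ) (by fun_prop) (by fun_prop)
  refine cornerTensorOrbit_le hp ?_ hv
  intro b hb d hd
  obtain ⟨b, hbM, hbs, rfl⟩ := mem_selfAdjointOrbit.1 hb.1
  obtain ⟨d, hdN, hds, rfl⟩ := mem_selfAdjointOrbit.1 hd.1
  have hYbd : h.map b d (Y ω) = Y (h.map b d ω) :=
    congr($(hY _ (mem_image2_of_mem hbM hdN)) ω)
  change ⟪Y ω, tp (b ω₁) (d ω₂)⟫_ℂ = ⟪Y (tp (b ω₁) (d ω₂)), ω⟫_ℂ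
  rw [← h.map_apply, ← inner_apply_left_of_isSelfAdjoint (h.isSelfAdjoint_map hbs hds), hYbd]

theorem commute_of_isSelfAdjoint (h : IsHilbertTensorProduct tp)
    (hX : IsSelfAdjoint X) (hXMN : X ∈ (image2 (h.map · ·) (M : Set (H →L[ℂ] H)) N).centralizer)
    (hY : Y ∈ (image2 (h.map · ·) (M.commutant : Set (H →L[ℂ] H)) N.commutant).centralizer) :
    Commute X Y := by
  refine sub_eq_zero.1 (h.eq_zero_of_inner_apply_self fun ω₁ ω₂ ↦ ?_)
  set e := (cyclicSubspace M.toStarSubalgebra ω₁).starProjection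
  set f := (cyclicSubspace N.toStarSubalgebra ω₂).starProjection
  set ω := tp ω₁ ω₂
  have hg : IsSelfAdjoint (h.map e f) := h.isSelfAdjoint_map
    isStarProjection_starProjection.isSelfAdjoint isStarProjection_starProjection.isSelfAdjoint
  have hgω : h.map e f ω = ω := by
    rw [h.map_apply, Submodule.starProjection_eq_self_iff.2 self_mem_cyclicSubspace,
      Submodule.starProjection_eq_self_iff.2 self_mem_cyclicSubspace]
  have hgY (w : HK) : h.map e f (Y w) = Y (h.map e f w) :=
    congr($(hY _ (mem_image2_of_mem starProjection_cyclicSubspace_mem_commutant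
      starProjection_cyclicSubspace_mem_commutant)) w)
  rw [sub_apply, inner_sub_left, sub_eq_zero, mul_apply_eq_comp, mul_apply_eq_comp]
  calc ⟪X (Y ω), ω⟫_ℂ
    _ = ⟪Y ω, X ω⟫_ℂ := inner_apply_left_of_isSelfAdjoint hX _ _
    _ = ⟪Y ω, h.map e f (X ω)⟫_ℂ := by
        rw [← inner_apply_left_of_isSelfAdjoint hg, hgY, hgω]
    _ = ⟪Y (h.map e f (X ω)), ω⟫_ℂ := h.inner_apply_eq_of_mem_cornerTensorOrbit hY
        (h.map_starProjection_apply_mem_cornerTensorOrbit hX hXMN)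
    _ = ⟪Y (X ω), ω⟫_ℂ := by
        rw [← hgY, inner_apply_left_of_isSelfAdjoint hg, hgω]

variable (M N) in
theorem centralizer_image2_map (h : IsHilbertTensorProduct tp) :
    (image2 (h.map · ·) (M : Set (H →L[ℂ] H)) N).centralizer =
      (image2 (h.map · ·) (M.commutant : Set (H →L[ℂ] H)) N.commutant).centralizer.centralizer := by
  set C := image2 (h.map · ·) (M : Set (H →L[ℂ] H)) (N : Set (K →L[ℂ] K))
  set D := image2 (h.map · ·) (M.commutant : Set (H →L[ℂ] H)) (N.commutant : Set (K →L[ℂ] K))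
  refine Set.Subset.antisymm (fun X hX Y hY ↦ ?_) ?_
  · have hstar : ∀ P ∈ C, star P ∈ C := by
      rintro _ ⟨a, ha, c, hc, rfl⟩
      exact ⟨star a, star_mem ha, star c, star_mem hc, (h.star_map a c).symm⟩
    have hcomm {Z : HK →L[ℂ] HK} (hZ : Z ∈ StarSubalgebra.centralizer ℂ C)
        (hZs : IsSelfAdjoint Z) : Commute Y Z :=
      (h.commute_of_isSelfAdjoint hZs
        (fun P hP ↦ (StarSubalgebra.mem_centralizer_iff ℂ).1 hZ P hP |>.1) hY).symm
    have hXC : X ∈ StarSubalgebra.centralizer ℂ C :=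
      (StarSubalgebra.mem_centralizer_iff ℂ).2 fun P hP ↦ ⟨hX P hP, hX _ (hstar P hP)⟩
    obtain ⟨X₁, hX₁, X₂, hX₂, hX₁s, hX₂s, rfl⟩ := exists_isSelfAdjoint_add_I_smul hXC
    exact (hcomm hX₁ hX₁s).add_right ((hcomm hX₂ hX₂s).smul_right I)
  · have hDC : D ⊆ C.centralizer := by
      rintro _ ⟨b, hb, d, hd, rfl⟩ _ ⟨a, ha, c, hc, rfl⟩
      simp only [h.map_mul_map, VonNeumannAlgebra.mem_commutant_iff.1 hb a ha,
        VonNeumannAlgebra.mem_commutant_iff.1 hd c hc]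
    rw [← Set.centralizer_centralizer_centralizer C]
    exact Set.centralizer_subset (Set.centralizer_subset hDC)

end IsHilbertTensorProduct

end CommutationTheorem

section FermiTensorProduct

open Complex (I)
open Set (MapsTo image2 mem_image2_of_mem)

variable {H : Type*} [NormedAddCommGroup H] [InnerProductSpace ℂ H] {U : H →L[ℂ] H}

theorem twist_eq (hU : U * U = 1) (T : H →L[ℂ] H) :
    twist U T = kleinTwist ℂ U U (evenPart ℂ U T + (-I) • oddPart ℂ U T) := by
  rw [kleinTwist_evenPart_add_smul_oddPart hU, neg_smul, ← smul_neg, ← mul_oddPart hU, twist,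
    evenPart_apply, oddPart_apply, mul_smul_comm, smul_smul, mul_comm I]

theorem image_twist_eq_image_kleinTwist (hU : U * U = 1) {p : Submodule ℂ (H →L[ℂ] H)}
    (hp : MapsTo (U * · * U) p p) : twist U '' p = kleinTwist ℂ U U '' p := by
  have hmem (c : ℂ) {T : H →L[ℂ] H} (hT : T ∈ p) : evenPart ℂ U T + c • oddPart ℂ U T ∈ p :=
    p.add_mem (evenPart_mem hp hT) (p.smul_mem c (oddPart_mem hp hT))
  refine Set.Subset.antisymm ?_ ?_ <;> rintro _ ⟨T, hT, rfl⟩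
  · exact ⟨_, hmem (-I) hT, (twist_eq hU T).symm⟩
  · refine ⟨_, hmem I hT, ?_⟩
    rw [twist_eq hU, evenPart_evenPart_add_smul_oddPart hU, oddPart_evenPart_add_smul_oddPart hU,
      smul_smul, neg_mul, Complex.I_mul_I, neg_neg, one_smul, evenPart_add_oddPart]

theorem twistedComm_eq_image_kleinTwist (hU : U * U = 1) {M : Set (H →L[ℂ] H)}
    (hM : MapsTo (U * · * U) M M) :
    twistedComm U M = kleinTwist ℂ U U '' M.centralizer :=
  image_twist_eq_image_kleinTwist hU (p := (Subalgebra.centralizer ℂ M).toSubmodule)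
    (mapsTo_conj_centralizer hU hM)

namespace IsHilbertTensorProduct

variable {K HK : Type*}
  [NormedAddCommGroup K] [InnerProductSpace ℂ K]
  [NormedAddCommGroup HK] [InnerProductSpace ℂ HK]
  {tp : H →ₗ[ℂ] K →ₗ[ℂ] HK} {V : K →L[ℂ] K} {M : Set (H →L[ℂ] H)} {N : Set (K →L[ℂ] K)}

theorem ext_of_homogeneous (h : IsHilbertTensorProduct tp) (hU : U * U = 1) {P Q : HK →L[ℂ] HK}
    (hPQ : ∀ (x : H) (y : K) (s : Bool), U x = cond s (-x) x → P (tp x y) = Q (tp x y)) :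
    P = Q := by
  refine h.ext fun x y ↦ ?_
  have hUU : U (U x) = x := DFunLike.congr_fun hU x
  have hx : x = (2⁻¹ : ℂ) • (x + U x) + (2⁻¹ : ℂ) • (x - U x) := by module
  rw [hx, map_add, LinearMap.add_apply, map_add, map_add,
    hPQ _ y false (by simp [hUU, add_comm]), hPQ _ y true (by simp [hUU, smul_sub])]

variable [CompleteSpace HK]

theorem kleinTwist_map_left_map (h : IsHilbertTensorProduct tp) (T : H →L[ℂ] H) (S : K →L[ℂ] K) :
    kleinTwist ℂ (h.map U 1) (h.map U 1) (h.map T S) = h.map (kleinTwist ℂ U U T) S := by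
  simp [kleinTwist_apply, evenPart_apply, oddPart_apply, h.map_mul_map, sub_mul]

theorem kleinTwist_map_right_map (h : IsHilbertTensorProduct tp) (T : H →L[ℂ] H) (S : K →L[ℂ] K) :
    kleinTwist ℂ (h.map 1 V) (h.map 1 V) (h.map T S) = h.map T (kleinTwist ℂ V V S) := by
  simp [kleinTwist_apply, evenPart_apply, oddPart_apply, h.map_mul_map, sub_mul]

theorem mapsTo_conj_image2_map (h : IsHilbertTensorProduct tp) (hM : MapsTo (U * · * U) M M)
    (hN : MapsTo (V * · * V) N N) :
    MapsTo (h.map U V * · * h.map U V) (image2 (h.map · ·) M N) (image2 (h.map · ·) M N) := by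
  rintro _ ⟨T, hT, S, hS, rfl⟩
  simp only [h.map_mul_map]
  exact mem_image2_of_mem (hM hT) (hN hS)

theorem kleinTwist_map_apply (h : IsHilbertTensorProduct tp) {T : H →L[ℂ] H} {S : K →L[ℂ] K}
    {s t : Bool} (hS : V * S * V = cond s (-S) S) {x : H} (hx : U x = cond t (-x) x) (y : K) :
    kleinTwist ℂ (h.map 1 V) (h.map U 1) (h.map T S) (tp x y) =
      (cond (s && t) (-1 : ℂ) 1) • tp (T x) (S y) := by
  have hconj : h.map 1 V * h.map T S * h.map 1 V = h.map T (V * S * V) := by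
    simp only [h.map_mul_map, one_mul, mul_one]
  cases s
  · rw [kleinTwist_of_conj_eq (hconj.trans (by rw [hS, cond_false]))]
    simp
  · rw [kleinTwist_of_conj_eq_neg (hconj.trans (by rw [hS, cond_true, map_neg])),
      h.map_mul_map, h.map_apply]
    cases t <;> simp [hx]

theorem isFermiTensorOp_iff (h : IsHilbertTensorProduct tp) (hU : U * U = 1) {T : H →L[ℂ] H}
    {S : K →L[ℂ] K} {P : HK →L[ℂ] HK} :
    IsFermiTensorOp U V tp T S P ↔ (∃ s : Bool, U * T * U = cond s (-T) T) ∧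
      (∃ s : Bool, V * S * V = cond s (-S) S) ∧
        P = kleinTwist ℂ (h.map 1 V) (h.map U 1) (h.map T S) := by
  constructor
  · rintro ⟨s, t, hT, hS, hP⟩
    refine ⟨⟨s, hT⟩, ⟨t, hS⟩, h.ext_of_homogeneous hU fun x y r hx ↦ ?_⟩
    rw [hP x y r hx, h.kleinTwist_map_apply hS hx]
  · rintro ⟨⟨s, hT⟩, ⟨t, hS⟩, rfl⟩
    exact ⟨s, t, hT, hS, fun x y r hx ↦ h.kleinTwist_map_apply hS hx y⟩

theorem centralizer_fermiGen (h : IsHilbertTensorProduct tp) (hU : U * U = 1) (hV : V * V = 1)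
    {p : Submodule ℂ (H →L[ℂ] H)} {q : Submodule ℂ (K →L[ℂ] K)} (hp : MapsTo (U * · * U) p p)
    (hq : MapsTo (V * · * V) q q) :
    (fermiGen U V tp p q).centralizer =
      (kleinTwist ℂ (h.map 1 V) (h.map U 1) '' image2 (h.map · ·) p q).centralizer := by
  refine Set.Subset.antisymm (fun Z hZ ↦ ?_) (Set.centralizer_subset ?_)
  · have hcomm {T : H →L[ℂ] H} {S : K →L[ℂ] K} (s t : Bool) (hT : T ∈ p) (hS : S ∈ q)
        (hTs : U * T * U = cond s (-T) T) (hSt : V * S * V = cond t (-S) S) :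
        Commute (kleinTwist ℂ (h.map 1 V) (h.map U 1) (h.map T S)) Z :=
      hZ _ ⟨T, hT, S, hS, (h.isFermiTensorOp_iff hU).2 ⟨⟨s, hTs⟩, ⟨t, hSt⟩, rfl⟩⟩
    have hcomm_right {T : H →L[ℂ] H} {S : K →L[ℂ] K} (t : Bool) (hT : T ∈ p) (hS : S ∈ q)
        (hSt : V * S * V = cond t (-S) S) :
        Commute (kleinTwist ℂ (h.map 1 V) (h.map U 1) (h.map T S)) Z := by
      rw [← evenPart_add_oddPart (𝕜 := ℂ) U T, map_add, LinearMap.add_apply, map_add]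
      exact (hcomm false t (evenPart_mem hp hT) hS (conj_evenPart hU T) hSt).add_left
        (hcomm true t (oddPart_mem hp hT) hS (conj_oddPart hU T) hSt)
    rintro _ ⟨_, ⟨T, hT, S, hS, rfl⟩, rfl⟩
    change Commute (kleinTwist ℂ (h.map 1 V) (h.map U 1) (h.map T S)) Z
    rw [← evenPart_add_oddPart (𝕜 := ℂ) V S, map_add, map_add]
    exact (hcomm_right false hT (evenPart_mem hq hS) (conj_evenPart hV S)).add_left
      (hcomm_right true hT (oddPart_mem hq hS) (conj_oddPart hV S))
  · rintro P ⟨T, hT, S, hS, hP⟩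
    exact ⟨_, mem_image2_of_mem hT hS, ((h.isFermiTensorOp_iff hU).1 hP).2.2.symm⟩

theorem commute_map_left_map_right (h : IsHilbertTensorProduct tp) (T : H →L[ℂ] H)
    (S : K →L[ℂ] K) : Commute (h.map T 1) (h.map 1 S) := by
  simp only [commute_iff_eq, h.map_mul_map, one_mul, mul_one]

theorem map_left_mul_self (h : IsHilbertTensorProduct tp) (hU : U * U = 1) :
    h.map U 1 * h.map U 1 = 1 := by
  rw [h.map_mul_map, hU, one_mul, h.map_one_one]

theorem map_right_mul_self (h : IsHilbertTensorProduct tp) (hV : V * V = 1) :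
    h.map 1 V * h.map 1 V = 1 := by
  rw [h.map_mul_map, hV, one_mul, h.map_one_one]

theorem map_left_mul_map_right (h : IsHilbertTensorProduct tp) (T : H →L[ℂ] H) (S : K →L[ℂ] K) :
    h.map T 1 * h.map 1 S = h.map T S := by
  rw [h.map_mul_map, one_mul, mul_one]

theorem mapsTo_conj_left_image2_map (h : IsHilbertTensorProduct tp) (hM : MapsTo (U * · * U) M M) :
    MapsTo (h.map U 1 * · * h.map U 1) (image2 (h.map · ·) M N) (image2 (h.map · ·) M N) :=
  h.mapsTo_conj_image2_map hM fun S hS ↦ by simpa using hS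

theorem mapsTo_conj_right_image2_map (h : IsHilbertTensorProduct tp)
    (hN : MapsTo (V * · * V) N N) :
    MapsTo (h.map 1 V * · * h.map 1 V) (image2 (h.map · ·) M N) (image2 (h.map · ·) M N) :=
  h.mapsTo_conj_image2_map (fun T hT ↦ by simpa using hT) hN

theorem image_kleinTwist_image2_map (h : IsHilbertTensorProduct tp) :
    kleinTwist ℂ (h.map U 1) (h.map U 1) ''
        (kleinTwist ℂ (h.map 1 V) (h.map 1 V) '' image2 (h.map · ·) M N) =
      image2 (h.map · ·) (kleinTwist ℂ U U '' M) (kleinTwist ℂ V V '' N) := by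
  simp only [Set.image_image2, Set.image2_image_left, Set.image2_image_right,
    h.kleinTwist_map_left_map, h.kleinTwist_map_right_map]

theorem twistedComm_fermiGen (h : IsHilbertTensorProduct tp) (hU : U * U = 1) (hV : V * V = 1)
    {p : Submodule ℂ (H →L[ℂ] H)} {q : Submodule ℂ (K →L[ℂ] K)} (hp : MapsTo (U * · * U) p p)
    (hq : MapsTo (V * · * V) q q) :
    twistedComm (h.map U V) (fermiGen U V tp p q).centralizer.centralizer =
      kleinTwist ℂ (h.map U V) (h.map U V) ''
        (kleinTwist ℂ (h.map U 1) (h.map 1 V) '' (image2 (h.map · ·) p q).centralizer) := by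
  have hA := h.map_left_mul_self hU
  have hB := h.map_right_mul_self hV
  have hAB := h.commute_map_left_map_right U V
  have hW : h.map U V * h.map U V = 1 := by rw [h.map_mul_map, hU, hV, h.map_one_one]
  have hAW : Commute (h.map U 1) (h.map U V) := by simp [commute_iff_eq, h.map_mul_map]
  have hBW : Commute (h.map 1 V) (h.map U V) := by simp [commute_iff_eq, h.map_mul_map]
  have hCA : MapsTo (h.map U 1 * · * h.map U 1) (image2 (h.map · ·) p q) _ :=
    h.mapsTo_conj_left_image2_map hp
  have hCB : MapsTo (h.map 1 V * · * h.map 1 V) (image2 (h.map · ·) p q) _ :=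
    h.mapsTo_conj_right_image2_map hq
  have hCW : MapsTo (h.map U V * · * h.map U V) (image2 (h.map · ·) p q) _ :=
    h.mapsTo_conj_image2_map hp hq
  rw [twistedComm, Set.centralizer_centralizer_centralizer, h.centralizer_fermiGen hU hV hp hq,
    ← twistedComm, twistedComm_eq_image_kleinTwist hW (mapsTo_conj_image_kleinTwist hBW hAW hCW),
    centralizer_image_kleinTwist hB hA hAB.symm hCB hCA]

theorem centralizer_centralizer_fermiGen_image_kleinTwist (h : IsHilbertTensorProduct tp)
    (hU : U * U = 1) (hV : V * V = 1)
    {p : Submodule ℂ (H →L[ℂ] H)} {q : Submodule ℂ (K →L[ℂ] K)} (hp : MapsTo (U * · * U) p p)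
    (hq : MapsTo (V * · * V) q q) :
    (fermiGen U V tp (kleinTwist ℂ U U '' p) (kleinTwist ℂ V V '' q)).centralizer.centralizer =
      kleinTwist ℂ (h.map 1 V) (h.map U 1) '' (kleinTwist ℂ (h.map U 1) (h.map U 1) ''
        (kleinTwist ℂ (h.map 1 V) (h.map 1 V) ''
          (image2 (h.map · ·) p q).centralizer.centralizer)) := by
  have hA := h.map_left_mul_self hU
  have hB := h.map_right_mul_self hV
  have hAA := Commute.refl (h.map U 1)
  have hBB := Commute.refl (h.map 1 V)
  have hAB := h.commute_map_left_map_right U V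
  have hDA : MapsTo (h.map U 1 * · * h.map U 1) (image2 (h.map · ·) p q) _ :=
    h.mapsTo_conj_left_image2_map hp
  have hDB : MapsTo (h.map 1 V * · * h.map 1 V) (image2 (h.map · ·) p q) _ :=
    h.mapsTo_conj_right_image2_map hq
  have hD₁A := mapsTo_conj_image_kleinTwist (𝕜 := ℂ) hAB.symm hAB.symm hDA
  have hD₁B := mapsTo_conj_image_kleinTwist (𝕜 := ℂ) hBB hBB hDB
  have hD₂A := mapsTo_conj_image_kleinTwist (𝕜 := ℂ) hAA hAA hD₁A
  have hD₂B := mapsTo_conj_image_kleinTwist (𝕜 := ℂ) hAB hAB hD₁B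
  have hκp : MapsTo (U * · * U) (kleinTwist ℂ U U '' p) _ :=
    mapsTo_conj_image_kleinTwist (Commute.refl U) (Commute.refl U) hp
  have hκq : MapsTo (V * · * V) (kleinTwist ℂ V V '' q) _ :=
    mapsTo_conj_image_kleinTwist (Commute.refl V) (Commute.refl V) hq
  rw [← centralizer_centralizer_image_kleinTwist hB hB hBB hDB hDB,
    ← centralizer_centralizer_image_kleinTwist hA hA hAA hD₁A hD₁A,
    ← centralizer_centralizer_image_kleinTwist hB hA hAB.symm hD₂B hD₂A,
    h.image_kleinTwist_image2_map]
  simp only [← Submodule.map_coe] at hκp hκq ⊢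
  rw [h.centralizer_fermiGen hU hV hκp hκq]

theorem twistedComm_fermiGen_eq (h : IsHilbertTensorProduct tp) [CompleteSpace H] [CompleteSpace K]
    (hU : U * U = 1) (hV : V * V = 1) {M : VonNeumannAlgebra H} {N : VonNeumannAlgebra K}
    (hM : MapsTo (U * · * U) M M) (hN : MapsTo (V * · * V) N N) :
    twistedComm (h.map U V) (fermiGen U V tp (M : Set (H →L[ℂ] H)) N).centralizer.centralizer =
      (fermiGen U V tp (twistedComm U (M : Set (H →L[ℂ] H)))
        (twistedComm V (N : Set (K →L[ℂ] K)))).centralizer.centralizer := by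
  have hM' : MapsTo (U * · * U) (M.commutant : Set (H →L[ℂ] H)) M.commutant := by
    rw [VonNeumannAlgebra.coe_commutant]; exact mapsTo_conj_centralizer hU hM
  have hN' : MapsTo (V * · * V) (N.commutant : Set (K →L[ℂ] K)) N.commutant := by
    rw [VonNeumannAlgebra.coe_commutant]; exact mapsTo_conj_centralizer hV hN
  rw [twistedComm_eq_image_kleinTwist hU hM, twistedComm_eq_image_kleinTwist hV hN,
    ← VonNeumannAlgebra.coe_commutant, ← VonNeumannAlgebra.coe_commutant]
  calc _ = kleinTwist ℂ (h.map U V) (h.map U V) '' (kleinTwist ℂ (h.map U 1) (h.map 1 V) ''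
        (image2 (h.map · ·) (M : Set (H →L[ℂ] H)) N).centralizer) :=
      h.twistedComm_fermiGen (p := M.toSubalgebra.toSubmodule) (q := N.toSubalgebra.toSubmodule)
        hU hV hM hN
    _ = kleinTwist ℂ (h.map 1 V) (h.map U 1) '' (kleinTwist ℂ (h.map U 1) (h.map U 1) ''
        (kleinTwist ℂ (h.map 1 V) (h.map 1 V) ''
          (image2 (h.map · ·) (M.commutant : Set (H →L[ℂ] H))
            N.commutant).centralizer.centralizer)) := by
      rw [h.centralizer_image2_map]
      simp only [Set.image_image, ← h.map_left_mul_map_right U V,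
        kleinTwist_mul_mul_kleinTwist (h.map_left_mul_self hU) (h.map_right_mul_self hV)
          (h.commute_map_left_map_right U V)]
    _ = _ := (h.centralizer_centralizer_fermiGen_image_kleinTwist
        (p := M.commutant.toSubalgebra.toSubmodule) (q := N.commutant.toSubalgebra.toSubmodule)
        hU hV hM' hN').symm

end IsHilbertTensorProduct

end FermiTensorProduct

theorem statement16_general {H K HK : Type*}
    [NormedAddCommGroup H] [InnerProductSpace ℂ H] [CompleteSpace H]
    [NormedAddCommGroup K] [InnerProductSpace ℂ K] [CompleteSpace K]
    [NormedAddCommGroup HK] [InnerProductSpace ℂ HK] [CompleteSpace HK]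
    (tp : H →ₗ[ℂ] K →ₗ[ℂ] HK)
    (htp_inner : ∀ (x x' : H) (y y' : K), ⟪tp x y, tp x' y'⟫_ℂ = ⟪x, x'⟫_ℂ * ⟪y, y'⟫_ℂ)
    (htp_dense : Dense (Submodule.span ℂ {z : HK | ∃ x y, z = tp x y} : Set HK))
    (U : H →L[ℂ] H) (hUunit : U * U = 1)
    (V : K →L[ℂ] K) (hVunit : V * V = 1)
    (W : HK →L[ℂ] HK) (hW : ∀ (x : H) (y : K), W (tp x y) = tp (U x) (V y))
    (M : Set (H →L[ℂ] H))
    (hM : Set.centralizer (Set.centralizer M) = M) (hMstar : ∀ T ∈ M, star T ∈ M)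
    (hMgrad : (fun T : H →L[ℂ] H => U * T * U) '' M = M)
    (N : Set (K →L[ℂ] K))
    (hN : Set.centralizer (Set.centralizer N) = N) (hNstar : ∀ S ∈ N, star S ∈ N)
    (hNgrad : (fun S : K →L[ℂ] K => V * S * V) '' N = N) :
    twistedComm W (Set.centralizer (Set.centralizer (fermiGen U V tp M N))) =
      Set.centralizer (Set.centralizer
        (fermiGen U V tp (twistedComm U M) (twistedComm V N))) := by
  have h : IsHilbertTensorProduct tp := ⟨htp_inner, htp_dense⟩
  obtain ⟨M, rfl⟩ := exists_vonNeumannAlgebra_coe_eq hM hMstar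
  obtain ⟨N, rfl⟩ := exists_vonNeumannAlgebra_coe_eq hN hNstar
  have hWmap : W = h.map U V := h.ext fun x y ↦ by rw [hW, h.map_apply]
  have hMU : Set.MapsTo (U * · * U) M M := Set.mapsTo_iff_image_subset.2 hMgrad.subset
  have hNV : Set.MapsTo (V * · * V) N N := Set.mapsTo_iff_image_subset.2 hNgrad.subset
  rw [hWmap]
  exact h.twistedComm_fermiGen_eq hUunit hVunit hMU hNV

/-- Theorem 4.5, twisted commutation theorem for two factors.  Let `M`,
`N` be von Neumann algebras on `ℤ₂`-graded Hilbert spaces `(H, U)`, `(K, V)` with `UMU = M`,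
`VNV = N`.  Then, on the (completed) Hilbert tensor product `HK = H ⊗ K` graded by `U ⊗ V`,
the twisted commutant of the Fermi tensor product satisfies `(M ⊗̂ N)^≀ = M^≀ ⊗̂ N^≀`. -/
theorem statement16 {H K HK : Type*}
    [NormedAddCommGroup H] [InnerProductSpace ℂ H] [CompleteSpace H]
    [NormedAddCommGroup K] [InnerProductSpace ℂ K] [CompleteSpace K]
    [NormedAddCommGroup HK] [InnerProductSpace ℂ HK] [CompleteSpace HK]
    -- a realization `tp` of the Hilbert tensor product `H ⊗ K`
    (tp : H →ₗ[ℂ] K →ₗ[ℂ] HK)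
    (htp_inner : ∀ (x x' : H) (y y' : K), ⟪tp x y, tp x' y'⟫_ℂ = ⟪x, x'⟫_ℂ * ⟪y, y'⟫_ℂ)
    (htp_dense : Dense (Submodule.span ℂ {z : HK | ∃ x y, z = tp x y} : Set HK))
    -- the gradings
    (U : H →L[ℂ] H) (hUsa : star U = U) (hUunit : U * U = 1)
    (V : K →L[ℂ] K) (hVsa : star V = V) (hVunit : V * V = 1)
    (W : HK →L[ℂ] HK) (hW : ∀ (x : H) (y : K), W (tp x y) = tp (U x) (V y))
    -- the von Neumann algebras
    (M : Set (H →L[ℂ] H))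
    (hM : Set.centralizer (Set.centralizer M) = M) (hMstar : ∀ T ∈ M, star T ∈ M)
    (hMgrad : (fun T : H →L[ℂ] H => U * T * U) '' M = M)
    (N : Set (K →L[ℂ] K))
    (hN : Set.centralizer (Set.centralizer N) = N) (hNstar : ∀ S ∈ N, star S ∈ N)
    (hNgrad : (fun S : K →L[ℂ] K => V * S * V) '' N = N) :
    twistedComm W (Set.centralizer (Set.centralizer (fermiGen U V tp M N))) =
      Set.centralizer (Set.centralizer
        (fermiGen U V tp (twistedComm U M) (twistedComm V N))) := by
  exact statement16_general tp htp_inner htp_dense U hUunit V hVunit W hW M hM hMstar hMgrad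
    N hN hNstar hNgrad

end
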